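/- Let q be a prime power and n a positive integer. Suppose the radical of q^n − 1 (the product of its distinct prime factors) factors as k·P·L, where k, P, L are pairwise coprime, P = p_1⋯p_s is a product of s distinct primes and L = l_1⋯l_t is a product of t distinct primes. Set δ = 1 − Σ_{i=1}^{s} 1/p_i, ε = Σ_{i=1}^{t} 1/l_i, and θ(k) = φ(k)/k. Suppose θ(k)·δ > ε and q^{n/2 − 2} > 4·(θ(k)·(s − 1 + 2δ)·2^{ω(k)} + (t − ε)) / (θ(k)·δ − ε). Then for every a, b in F_q there exists a nonzero element ξ in F_{q^n} such that Tr(ξ) = a, Tr(ξ^{-1}) = b, and ξ + ξ^{-1} is a primitive element of F_{q^n}. -/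

import Mathlib

/-!
The nonzero `r`-th powers are detected by a multiplicative character of prime order `r`, and the
two trace conditions by additive characters, so Cohen's modified prime sieve produces the required
element as soon as the nontrivial sums `∑ χ (x + x⁻¹) * ψ (u * x + v * x⁻¹)` over `E` are bounded
by `4 * √(card E)`.

If `u = v = 0`, the sum reduces to Jacobi sums. Otherwise `x ↦ x⁻¹` allows one to assume `u ≠ 0`,
and the sum belongs to the fibre product of a Kummer cover `Y ^ d = x + x⁻¹` and an Artin–Schreier
cover `Z ^ (d + 1) - Z = u * x + v * x⁻¹` of the line. Stepanov's method, with monomials graded by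
their pole order at the unique point at infinity, bounds the number of points on which a power of
Frobenius acts as a prescribed automorphism of the cover. This yields a bound `C * √(card K)` for
the sum over every sufficiently large extension `K` of even degree. The `L`-function of the sum is
a polynomial of degree at most four, and up to sign these sums are the power sums of its
reciprocal roots, so the constant improves to `4`.
-/

open Polynomial

/-! ### Monomials on the curve and their pole orders -/

section PoleWeight

variable {d : ℕ}

/-- The weight of the monomial `x ^ k * y ^ i * z ^ j` with exponents `t = (k, i, j)`: its pole
order at infinity on the curve `y ^ d = x ^ (d + 1) + x ^ (d - 1)`,
`z ^ (d + 1) = u * x ^ (d + 2) + x ^ d * z + v * x ^ d`, where `x`, `y`, `z` have poles of orders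
`d * (d + 1)`, `(d + 1) ^ 2` and `d * (d + 2)`. -/
def poleWeight (d : ℕ) (t : ℕ × ℕ × ℕ) : ℕ :=
  t.1 * (d * (d + 1)) + t.2.1 * (d + 1) ^ 2 + t.2.2 * (d * (d + 2))

/-- Exponents of the monomials which survive the reduction of `y ^ d` and `z ^ (d + 1)` by the
equations of the curve. -/
def IsReducedExponent (d : ℕ) (t : ℕ × ℕ × ℕ) : Prop := t.2.1 < d ∧ t.2.2 ≤ d

lemma poleWeight_add (s t : ℕ × ℕ × ℕ) :
    poleWeight d (s + t) = poleWeight d s + poleWeight d t := by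
  simp only [poleWeight, Prod.fst_add, Prod.snd_add]
  ring

lemma poleWeight_nsmul (n : ℕ) (t : ℕ × ℕ × ℕ) : poleWeight d (n • t) = n * poleWeight d t := by
  simp only [poleWeight, Prod.smul_fst, Prod.smul_snd, smul_eq_mul]
  ring

lemma poleWeight_reduce_y (k i j : ℕ) :
    poleWeight d (k, d + i, j) = poleWeight d (k + (d + 1), i, j) := by
  simp only [poleWeight]; ring

lemma poleWeight_reduce_z (k i j : ℕ) :
    poleWeight d (k, i, d + 1 + j) = poleWeight d (k + (d + 2), i, j) := by
  simp only [poleWeight]; ring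

lemma poleWeight_modEq (t : ℕ × ℕ × ℕ) : poleWeight d t ≡ t.2.1 [MOD d] := by
  have h : poleWeight d t = d * (t.1 * (d + 1) + (t.2.1 + t.2.2) * (d + 2)) + t.2.1 := by
    rw [poleWeight]; ring
  rw [h, Nat.ModEq, Nat.mul_add_mod]

lemma poleWeight_add_modEq_zero (t : ℕ × ℕ × ℕ) : poleWeight d t + t.2.2 ≡ 0 [MOD d + 1] :=
  Nat.modEq_zero_iff_dvd.2 ⟨t.1 * d + (t.2.1 + t.2.2) * (d + 1), by rw [poleWeight]; ring⟩

lemma poleWeight_injOn : Set.InjOn (poleWeight d) {t | IsReducedExponent d t} := by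
  rintro ⟨k, i, j⟩ ⟨hi, hj⟩ ⟨k', i', j'⟩ ⟨hi', hj'⟩ h
  have hi_eq : i = i' := by
    have := (poleWeight_modEq (d := d) (k, i, j)).symm.trans (h ▸ poleWeight_modEq (k', i', j'))
    exact this.eq_of_lt_of_lt hi hi'
  have hj_eq : j = j' := by
    have := (poleWeight_add_modEq_zero (d := d) (k, i, j)).trans
      (poleWeight_add_modEq_zero (k', i', j')).symm
    rw [h] at this
    exact (Nat.ModEq.add_left_cancel' _ this).eq_of_lt_of_lt
      (Nat.lt_succ_of_le hj) (Nat.lt_succ_of_le hj')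
  subst hi_eq hj_eq
  have hk : k * (d * (d + 1)) = k' * (d * (d + 1)) := by simpa [poleWeight] using h
  rw [Nat.eq_of_mul_eq_mul_right (Nat.mul_pos (Nat.zero_lt_of_lt hi) d.succ_pos) hk]

lemma exists_isReducedExponent_poleWeight_eq (hd : 0 < d) {w : ℕ} (hw : 2 * (d + 1) ^ 3 ≤ w) :
    ∃ t, IsReducedExponent d t ∧ poleWeight d t = w := by
  let i := w % d
  let j := d * w % (d + 1)
  have hi : i < d := Nat.mod_lt _ hd
  have hj : j ≤ d := Nat.lt_succ_iff.1 (Nat.mod_lt _ d.succ_pos)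
  have hle : poleWeight d (0, i, j) ≤ w := by
    have hi_le : i * (d + 1) ^ 2 ≤ (d + 1) * (d + 1) ^ 2 := Nat.mul_le_mul_right _ (by lia)
    have hj_le : j * (d * (d + 2)) ≤ (d + 1) * (d + 1) ^ 2 :=
      Nat.mul_le_mul (by lia) (by nlinarith)
    simp only [poleWeight]
    linarith
  have hmod_d : poleWeight d (0, i, j) ≡ w [MOD d] := (poleWeight_modEq _).trans (Nat.mod_modEq w d)
  have hmod_succ : poleWeight d (0, i, j) ≡ w [MOD d + 1] := by
    refine Nat.ModEq.add_right_cancel' j ((poleWeight_add_modEq_zero _).trans ?_)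
    have hjw : w + j ≡ w + d * w [MOD d + 1] := (Nat.mod_modEq _ _).add_left w
    exact (hjw.trans (Nat.modEq_zero_iff_dvd.2 ⟨w, by ring⟩)).symm
  obtain ⟨k, hk⟩ := (Nat.modEq_iff_dvd' hle).1
    ((Nat.modEq_and_modEq_iff_modEq_mul (by simp)).1 ⟨hmod_d, hmod_succ⟩)
  refine ⟨(k, i, j), ⟨hi, hj⟩, ?_⟩
  calc poleWeight d (k, i, j) = d * (d + 1) * k + poleWeight d (0, i, j) := by
        simp only [poleWeight]; ring
    _ = w := by rw [← hk, Nat.sub_add_cancel hle]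

end PoleWeight

/-- A point of the curve `y ^ d = x ^ (d + 1) + x ^ (d - 1)`,
`z ^ (d + 1) = u * x ^ (d + 2) + x ^ d * z + v * x ^ d` with coordinates in `L`. Away from `x = 0`
this is, in the coordinates `Y = y / x` and `Z = z / x`, the fibre product of the Kummer cover
`Y ^ d = x + x⁻¹` and the Artin–Schreier cover `Z ^ (d + 1) - Z = u * x + v * x⁻¹`. -/
structure CurvePoint {K : Type*} (L : Type*) [Field K] [Field L] [Algebra K L] (d : ℕ)
    (u v : K) where
  x : L
  y : L
  z : L
  y_pow : y ^ d = x ^ (d + 1) + x ^ (d - 1)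
  z_pow : z ^ (d + 1) = algebraMap K L u * x ^ (d + 2) + x ^ d * z + algebraMap K L v * x ^ d

namespace CurvePoint

section Monomials

variable {K : Type*} (L : Type*) [Field K] [Field L] [Algebra K L] (d : ℕ) (u v : K)

/-- The monomial `x ^ k * y ^ i * z ^ j` with exponents `t = (k, i, j)`, as a function on the
curve. -/
def monomial (t : ℕ × ℕ × ℕ) : CurvePoint L d u v → L :=
  fun P ↦ P.x ^ t.1 * P.y ^ t.2.1 * P.z ^ t.2.2

/-- The span of all monomials of weight at most `w`. -/
def weightSpan (w : ℕ) : Submodule K (CurvePoint L d u v → L) :=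
  Submodule.span K (monomial L d u v '' {t | poleWeight d t ≤ w})

/-- The span of the reduced monomials of weight less than `w`. -/
def reducedSpan (w : ℕ) : Submodule K (CurvePoint L d u v → L) :=
  Submodule.span K (monomial L d u v '' {t | IsReducedExponent d t ∧ poleWeight d t < w})

variable {L d u v}

lemma monomial_mul (s t : ℕ × ℕ × ℕ) :
    monomial L d u v s * monomial L d u v t = monomial L d u v (s + t) := by
  funext P
  simp only [monomial, Pi.mul_apply, Prod.fst_add, Prod.snd_add]
  ring

lemma monomial_pow (t : ℕ × ℕ × ℕ) (n : ℕ) :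
    monomial L d u v t ^ n = monomial L d u v (n • t) := by
  funext P
  simp only [monomial, Pi.pow_apply, Prod.smul_fst, Prod.smul_snd, smul_eq_mul]
  ring

lemma monomial_mem_weightSpan {t : ℕ × ℕ × ℕ} {w : ℕ} (h : poleWeight d t ≤ w) :
    monomial L d u v t ∈ weightSpan L d u v w :=
  Submodule.subset_span ⟨t, h, rfl⟩

lemma monomial_mem_reducedSpan {t : ℕ × ℕ × ℕ} {w : ℕ} (ht : IsReducedExponent d t)
    (h : poleWeight d t < w) : monomial L d u v t ∈ reducedSpan L d u v w :=
  Submodule.subset_span ⟨t, ⟨ht, h⟩, rfl⟩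

lemma weightSpan_mono : Monotone (weightSpan L d u v) := fun _ _ h ↦
  Submodule.span_mono (Set.image_mono fun _ ht ↦ le_trans ht h)

lemma reducedSpan_mono : Monotone (reducedSpan L d u v) := fun _ _ h ↦
  Submodule.span_mono (Set.image_mono fun _ ht ↦ ⟨ht.1, ht.2.trans_le h⟩)

lemma mul_mem_weightSpan {a b : ℕ} {f g : CurvePoint L d u v → L}
    (hf : f ∈ weightSpan L d u v a) (hg : g ∈ weightSpan L d u v b) :
    f * g ∈ weightSpan L d u v (a + b) := by
  have hle : weightSpan L d u v a * weightSpan L d u v b ≤ weightSpan L d u v (a + b) := by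
    rw [weightSpan, weightSpan, Submodule.span_mul_span, Submodule.span_le]
    rintro _ ⟨_, ⟨s, hs, rfl⟩, _, ⟨t, ht, rfl⟩, rfl⟩
    simp only [monomial_mul]
    exact monomial_mem_weightSpan ((poleWeight_add s t).trans_le (add_le_add hs ht))
  exact hle (Submodule.mul_mem_mul hf hg)

lemma pow_mem_weightSpan {a : ℕ} {f : CurvePoint L d u v → L} (hf : f ∈ weightSpan L d u v a)
    (n : ℕ) : f ^ n ∈ weightSpan L d u v (n * a) := by
  induction n with
  | zero =>
    have h : monomial L d u v 0 ∈ weightSpan L d u v (0 * a) :=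
      monomial_mem_weightSpan (by simp [poleWeight])
    rwa [show monomial L d u v 0 = f ^ 0 by funext P; simp [monomial]] at h
  | succ n ih =>
    rw [pow_succ, Nat.succ_mul]
    exact mul_mem_weightSpan ih hf

lemma monomial_reduce_y (k i j : ℕ) :
    monomial L d u v (k, d + i, j) =
      monomial L d u v (k + (d + 1), i, j) + monomial L d u v (k + (d - 1), i, j) := by
  funext P
  simp only [monomial, Pi.add_apply, pow_add P.y, P.y_pow]
  ring

lemma monomial_reduce_z (k i j : ℕ) :
    monomial L d u v (k, i, d + 1 + j) = u • monomial L d u v (k + (d + 2), i, j) +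
      (monomial L d u v (k + d, i, j + 1) + v • monomial L d u v (k + d, i, j)) := by
  funext P
  simp only [monomial, Pi.add_apply, Pi.smul_apply, pow_add P.z (d + 1), P.z_pow]
  simp only [Algebra.smul_def]
  ring

lemma reducedSpan_of_sub_smul_mem {f g : CurvePoint L d u v → L} {α : K} {w w' : ℕ} (hw : w ≤ w')
    (hsub : f - α • g ∈ reducedSpan L d u v w) (hg : g ∈ reducedSpan L d u v w') :
    f ∈ reducedSpan L d u v w' := by
  simpa using add_mem (reducedSpan_mono hw hsub) (Submodule.smul_mem _ α hg)

lemma exists_monomial_sub_smul_mem_reducedSpan (hd : 0 < d) (hu : u ≠ 0) (t : ℕ × ℕ × ℕ) :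
    ∃ s, IsReducedExponent d s ∧ poleWeight d s = poleWeight d t ∧ ∃ α : K, α ≠ 0 ∧
      monomial L d u v t - α • monomial L d u v s ∈ reducedSpan L d u v (poleWeight d t) := by
  induction hw : poleWeight d t using Nat.strong_induction_on generalizing t with
  | _ w ih_weight
  have mem_of_lt (t : ℕ × ℕ × ℕ) (ht : poleWeight d t < w) :
      monomial L d u v t ∈ reducedSpan L d u v w := by
    obtain ⟨s, hs, hsw, α, -, hα⟩ := ih_weight _ ht t rfl
    exact reducedSpan_of_sub_smul_mem ht.le hα (monomial_mem_reducedSpan hs (hsw.trans_lt ht))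
  induction hn : t.2.1 + t.2.2 using Nat.strong_induction_on generalizing t with
  | _ n ih_degree
  obtain ⟨k, i, j⟩ := t
  have : 0 < d * (d + 1) := by positivity
  by_cases hi : d ≤ i
  · obtain ⟨i, rfl⟩ := Nat.exists_eq_add_of_le hi
    rw [poleWeight_reduce_y] at hw
    obtain ⟨s, hs, hsw, α, hα0, hα⟩ := ih_degree (i + j) (by dsimp only at hn; lia) _ hw rfl
    refine ⟨s, hs, hsw, α, hα0, ?_⟩
    rw [monomial_reduce_y, add_sub_right_comm]
    exact add_mem hα (mem_of_lt _ (by rw [← hw]; simp only [poleWeight]; gcongr; lia))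
  by_cases hj : d + 1 ≤ j
  · obtain ⟨j, rfl⟩ := Nat.exists_eq_add_of_le hj
    rw [poleWeight_reduce_z] at hw
    obtain ⟨s, hs, hsw, α, hα0, hα⟩ := ih_degree (i + j) (by dsimp only at hn; lia) _ hw rfl
    refine ⟨s, hs, hsw, u * α, mul_ne_zero hu hα0, ?_⟩
    rw [monomial_reduce_z, add_sub_right_comm, mul_smul, ← smul_sub]
    have hlow₁ := mem_of_lt (k + d, i, j + 1) (by rw [← hw]; simp only [poleWeight]; nlinarith)
    have hlow₂ := mem_of_lt (k + d, i, j) (by rw [← hw]; simp only [poleWeight]; gcongr; lia)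
    exact add_mem (Submodule.smul_mem _ _ hα) (add_mem hlow₁ (Submodule.smul_mem _ _ hlow₂))
  · exact ⟨(k, i, j), ⟨lt_of_not_ge hi, Nat.lt_succ_iff.1 (lt_of_not_ge hj)⟩, hw, 1, one_ne_zero,
      by simp⟩

lemma weightSpan_le_reducedSpan (hd : 0 < d) (hu : u ≠ 0) (w : ℕ) :
    weightSpan L d u v w ≤ reducedSpan L d u v (w + 1) := by
  refine Submodule.span_le.2 ?_
  rintro _ ⟨t, ht, rfl⟩
  have ht' : poleWeight d t < w + 1 := Nat.lt_succ_of_le ht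
  obtain ⟨s, hs, hsw, α, -, hα⟩ :=
    exists_monomial_sub_smul_mem_reducedSpan (L := L) (v := v) hd hu t
  exact reducedSpan_of_sub_smul_mem ht'.le hα (monomial_mem_reducedSpan hs (hsw.trans_lt ht'))

lemma finite_isReducedExponent_poleWeight_lt (w : ℕ) :
    {t | IsReducedExponent d t ∧ poleWeight d t < w}.Finite :=
  Set.Finite.of_injOn (fun _ ht ↦ ht.2) (poleWeight_injOn.mono fun _ ht ↦ ht.1)
    (Set.finite_Iio w)

instance (w : ℕ) : Module.Finite K (reducedSpan L d u v w) :=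
  FiniteDimensional.span_of_finite K ((finite_isReducedExponent_poleWeight_lt w).image _)

lemma finrank_reducedSpan_le (w : ℕ) : Module.finrank K (reducedSpan L d u v w) ≤ w := by
  have hfin := finite_isReducedExponent_poleWeight_lt (d := d) w
  have := (hfin.image (monomial L d u v)).fintype
  calc Module.finrank K (reducedSpan L d u v w)
      ≤ (monomial L d u v '' {t | IsReducedExponent d t ∧ poleWeight d t < w}).ncard := by
        rw [Set.ncard_eq_toFinset_card']
        exact finrank_span_le_card _
    _ ≤ {t | IsReducedExponent d t ∧ poleWeight d t < w}.ncard := Set.ncard_image_le hfin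
    _ ≤ (Set.Iio w).ncard := Set.ncard_le_ncard_of_injOn (poleWeight d) (fun _ ht ↦ ht.2)
        (poleWeight_injOn.mono fun _ ht ↦ ht.1) (Set.finite_Iio w)
    _ = w := by simp [Set.ncard_eq_toFinset_card']

end Monomials

end CurvePoint

section SeparableRoots

variable {L : Type*} [Field L]

lemma eq_zero_of_degree_lt_of_forall_isRoot {f q : L[X]} (hf : f.Separable) (hsplit : f.Splits)
    (hdeg : q.degree < f.degree) (h : ∀ y, f.IsRoot y → q.IsRoot y) : q = 0 := by
  by_contra hq
  refine hq (eq_zero_of_dvd_of_degree_lt (hsplit.dvd_of_roots_le_roots hf.ne_zero ?_) hdeg)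
  exact (Multiset.le_iff_subset (nodup_roots hf)).2 fun y hy ↦
    (mem_roots hq).2 (h y (isRoot_of_mem_roots hy))

lemma coeff_eq_zero_of_forall_isRoot_sum_eq_zero {f : L[X]} (hf : f.Separable)
    (hsplit : f.Splits) {b : ℕ → L}
    (h : ∀ y, f.IsRoot y → ∑ i ∈ Finset.range f.natDegree, b i * y ^ i = 0) :
    ∀ i < f.natDegree, b i = 0 := by
  set q : L[X] := ∑ i ∈ Finset.range f.natDegree, C (b i) * X ^ i with hq
  have hdeg : q.degree < f.degree := by
    rw [degree_eq_natDegree hf.ne_zero]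
    exact mem_degreeLT.1 <| sum_mem fun i hi ↦ mem_degreeLT.2 <|
      (degree_C_mul_X_pow_le i (b i)).trans_lt (by exact_mod_cast Finset.mem_range.1 hi)
  have hq0 : q = 0 := eq_zero_of_degree_lt_of_forall_isRoot hf hsplit hdeg fun y hy ↦ by
    simpa [hq, eval_finsetSum] using h y hy
  intro i hi
  simpa [hq, finsetSum_coeff, coeff_X_pow, hi] using congrArg (coeff · i) hq0

lemma separable_X_pow_sub_linear {n : ℕ} (hn : (n : L) = 0) {a : L} (ha : a ≠ 0) (b : L) :
    (X ^ n - (C a * X + C b) : L[X]).Separable := by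
  have hder : derivative (X ^ n - (C a * X + C b) : L[X]) = -C a := by
    simp [derivative_X_pow, hn]
  rw [separable_def, hder]
  exact ⟨0, -C a⁻¹, by simp [← C_mul, inv_mul_cancel₀ ha]⟩

lemma natDegree_X_pow_sub_linear {n : ℕ} (hn : 1 < n) (a b : L) :
    (X ^ n - (C a * X + C b) : L[X]).natDegree = n := by
  rw [natDegree_sub_eq_left_of_natDegree_lt, natDegree_X_pow]
  rw [natDegree_X_pow]
  exact natDegree_linear_le.trans_lt hn

end SeparableRoots

namespace CurvePoint

section Vanishing

variable {K L : Type*} [Field K] [Field L] [Algebra K L] {d : ℕ} {u v : K}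

/-- The fibre above `x` has the full `d * (d + 1)` points, so it separates these functions. -/
lemma coeff_eq_zero_of_vanish_on_fibre [IsAlgClosed L] (hd : 0 < d)
    (hchar : ((d + 1 : ℕ) : L) = 0) {x : L} (hx : x ≠ 0) (hx2 : x ^ 2 + 1 ≠ 0) {b : ℕ → ℕ → L}
    (h : ∀ P : CurvePoint L d u v, P.x = x →
      ∑ j ∈ Finset.range (d + 1), (∑ i ∈ Finset.range d, b i j * P.y ^ i) * P.z ^ j = 0)
    {i j : ℕ} (hi : i < d) (hj : j < d + 1) : b i j = 0 := by
  have hd0 : (d : L) ≠ 0 := fun h0 ↦ by simp [h0] at hchar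
  have hy_pow_ne : x ^ (d + 1) + x ^ (d - 1) ≠ 0 := by
    obtain ⟨e, rfl⟩ := Nat.exists_eq_add_of_lt hd
    have hfactor : x ^ (0 + e + 1 + 1) + x ^ (0 + e + 1 - 1) = x ^ e * (x ^ 2 + 1) := by
      rw [Nat.add_sub_cancel]; ring
    exact hfactor ▸ mul_ne_zero (pow_ne_zero _ hx) hx2
  set fy : L[X] := X ^ d - C (x ^ (d + 1) + x ^ (d - 1)) with hfy
  set g : L := algebraMap K L u * x ^ (d + 2) + algebraMap K L v * x ^ d with hg
  set fz : L[X] := X ^ (d + 1) - (C (x ^ d) * X + C g) with hfz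
  have hdeg_y : fy.natDegree = d := natDegree_X_pow_sub_C
  have hdeg_z : fz.natDegree = d + 1 := natDegree_X_pow_sub_linear (by lia) _ _
  refine coeff_eq_zero_of_forall_isRoot_sum_eq_zero (f := fy) (b := (b · j))
    (separable_X_pow_sub_C _ hd0 hy_pow_ne) (IsAlgClosed.splits fy) (fun y hy ↦ ?_) i (hdeg_y ▸ hi)
  have hy_pow : y ^ d = x ^ (d + 1) + x ^ (d - 1) := by simpa [hfy, sub_eq_zero] using hy
  refine coeff_eq_zero_of_forall_isRoot_sum_eq_zero (f := fz)
    (b := fun j ↦ ∑ i ∈ Finset.range fy.natDegree, b i j * y ^ i)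
    (separable_X_pow_sub_linear hchar (pow_ne_zero d hx) g) (IsAlgClosed.splits fz)
    (fun z hz ↦ ?_) j (hdeg_z ▸ hj)
  have hz_pow : z ^ (d + 1) = x ^ d * z + g := by simpa [hfz, sub_eq_zero] using hz
  rw [hdeg_y, hdeg_z]
  exact h ⟨x, y, z, hy_pow, by rw [hz_pow, hg]; ring⟩ rfl

variable (L) in
/-- The coefficient of `y ^ i * z ^ j`, as a polynomial in `x`, of the combination of monomials with
coefficients `r`. -/
noncomputable def coeffPoly (r : ℕ × ℕ × ℕ →₀ K) (i j : ℕ) : L[X] :=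
  ∑ t ∈ r.support with t.2 = (i, j), C (algebraMap K L (r t)) * X ^ t.1

lemma coeff_coeffPoly (r : ℕ × ℕ × ℕ →₀ K) (k i j : ℕ) :
    (coeffPoly L r i j).coeff k = algebraMap K L (r (k, i, j)) := by
  classical
  simp only [coeffPoly, finsetSum_coeff, coeff_C_mul, coeff_X_pow, mul_ite, mul_one, mul_zero]
  rw [← Finset.sum_filter, Finset.filter_filter]
  by_cases hr : r (k, i, j) = 0
  · rw [hr, map_zero]
    refine Finset.sum_eq_zero fun t ht ↦ ?_
    obtain ⟨-, ht_snd, rfl⟩ := Finset.mem_filter.1 ht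
    rw [← ht_snd] at hr
    rw [hr, map_zero]
  · rw [Finset.sum_eq_single_of_mem (k, i, j) (by simp [hr])]
    rintro t ht hne
    obtain ⟨-, ht_snd, ht_fst⟩ := Finset.mem_filter.1 ht
    exact absurd (Prod.ext ht_fst.symm ht_snd) hne

lemma natDegree_coeffPoly_mul_lt {r : ℕ × ℕ × ℕ →₀ K} {M : ℕ}
    (hr : ∀ t ∈ r.support, poleWeight d t < M) {i j : ℕ} (h0 : coeffPoly L r i j ≠ 0) :
    (coeffPoly L r i j).natDegree * (d * (d + 1)) < M := by
  set k := (coeffPoly L r i j).natDegree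
  have hk : (k, i, j) ∈ r.support := by
    have : (coeffPoly L r i j).coeff k ≠ 0 := leadingCoeff_ne_zero.2 h0
    rw [coeff_coeffPoly] at this
    exact Finsupp.mem_support_iff.2 ((_root_.map_ne_zero _).1 this)
  have := hr _ hk
  simp only [poleWeight] at this
  lia

lemma linearCombination_monomial_apply {r : ℕ × ℕ × ℕ →₀ K}
    (hr : ∀ t ∈ r.support, IsReducedExponent d t) (P : CurvePoint L d u v) :
    Finsupp.linearCombination K (monomial L d u v) r P =
      ∑ j ∈ Finset.range (d + 1), (∑ i ∈ Finset.range d, (coeffPoly L r i j).eval P.x * P.y ^ i) *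
        P.z ^ j := by
  have hmaps : ∀ t ∈ r.support, t.2 ∈ Finset.range d ×ˢ Finset.range (d + 1) := fun t ht ↦
    Finset.mem_product.2
      ⟨Finset.mem_range.2 (hr t ht).1, Finset.mem_range.2 (Nat.lt_succ_of_le (hr t ht).2)⟩
  rw [Finsupp.linearCombination_apply, Finsupp.sum, Finset.sum_apply,
    ← Finset.sum_fiberwise_of_maps_to hmaps, Finset.sum_product_right]
  simp only [coeffPoly, eval_finsetSum, Finset.sum_mul]
  refine Finset.sum_congr rfl fun j _ ↦ Finset.sum_congr rfl fun i _ ↦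
    Finset.sum_congr rfl fun t ht ↦ ?_
  have ht_snd : t.2 = (i, j) := (Finset.mem_filter.1 ht).2
  simp only [Pi.smul_apply, monomial, ht_snd, eval_mul, eval_C, eval_pow, eval_X]
  simp only [Algebra.smul_def]
  ring

lemma card_mul_lt_of_forall_vanish [IsAlgClosed L] (hd : 0 < d) (hchar : ((d + 1 : ℕ) : L) = 0)
    {M : ℕ} {r : ℕ × ℕ × ℕ →₀ K} (hr : r ≠ 0)
    (hr_mem : ∀ t ∈ r.support, IsReducedExponent d t ∧ poleWeight d t < M) {N : Finset L}
    (hN : ∀ x ∈ N, x ≠ 0 ∧ x ^ 2 + 1 ≠ 0)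
    (hvanish : ∀ P : CurvePoint L d u v, P.x ∈ N →
      Finsupp.linearCombination K (monomial L d u v) r P = 0) :
    N.card * (d * (d + 1)) < M := by
  obtain ⟨⟨k, i, j⟩, ht⟩ := Finsupp.support_nonempty_iff.2 hr
  obtain ⟨hi, hj⟩ := (hr_mem _ ht).1
  have hne : coeffPoly L r i j ≠ 0 := fun h0 ↦ by
    have := coeff_coeffPoly (L := L) r k i j
    rw [h0, coeff_zero, eq_comm, map_eq_zero] at this
    exact Finsupp.mem_support_iff.1 ht this
  have hroots : ∀ x ∈ N, (coeffPoly L r i j).eval x = 0 := fun x hx ↦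
    coeff_eq_zero_of_vanish_on_fibre (b := fun i j ↦ (coeffPoly L r i j).eval x) (u := u) (v := v)
      hd hchar (hN x hx).1 (hN x hx).2
      (fun P hP ↦ by
        rw [← hP, ← linearCombination_monomial_apply fun t ht ↦ (hr_mem t ht).1]
        exact hvanish P (hP ▸ hx)) hi (Nat.lt_succ_of_le hj)
  have hcard : N.card ≤ (coeffPoly L r i j).natDegree :=
    not_lt.1 fun hlt ↦ hne (eq_zero_of_natDegree_lt_card_of_eval_eq_zero' _ N hroots hlt)
  exact (Nat.mul_le_mul_right _ hcard).trans_lt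
    (natDegree_coeffPoly_mul_lt (fun t ht ↦ (hr_mem t ht).2) hne)

lemma card_mul_lt_of_mem_reducedSpan [IsAlgClosed L] (hd : 0 < d)
    (hchar : ((d + 1 : ℕ) : L) = 0) {M : ℕ} {G : CurvePoint L d u v → L} (hG : G ≠ 0)
    (hGM : G ∈ reducedSpan L d u v M) {N : Finset L} (hN : ∀ x ∈ N, x ≠ 0 ∧ x ^ 2 + 1 ≠ 0)
    (hvanish : ∀ P : CurvePoint L d u v, P.x ∈ N → G P = 0) : N.card * (d * (d + 1)) < M := by
  obtain ⟨r, hr, rfl⟩ := (Finsupp.mem_span_image_iff_linearCombination K).1 hGM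
  refine card_mul_lt_of_forall_vanish hd hchar ?_ (fun t ht ↦ (Finsupp.mem_supported K r).1 hr ht)
    hN hvanish
  rintro rfl
  exact hG (map_zero _)

lemma infinite_ne_zero_and_sq_add_one_ne_zero [Infinite L] :
    {x : L | x ≠ 0 ∧ x ^ 2 + 1 ≠ 0}.Infinite := by
  have hne : (X * (X ^ 2 + 1) : L[X]) ≠ 0 :=
    mul_ne_zero X_ne_zero (monic_X_pow_add_C 1 two_ne_zero).ne_zero
  convert (finite_setOfPred_isRoot hne).infinite_compl using 1
  ext x
  simp

lemma linearIndepOn_monomial [IsAlgClosed L] (hd : 0 < d) (hchar : ((d + 1 : ℕ) : L) = 0) :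
    LinearIndepOn K (monomial L d u v) {t | IsReducedExponent d t} := by
  have : Infinite L := IsAlgClosed.instInfinite
  rw [linearIndepOn_iff]
  intro r hr hr0
  by_contra hne
  set M := r.support.sup (poleWeight d) + 1
  obtain ⟨N, hN, hNM⟩ := (infinite_ne_zero_and_sq_add_one_ne_zero (L := L)).exists_subset_card_eq M
  have hlt : N.card * (d * (d + 1)) < M :=
    card_mul_lt_of_forall_vanish (u := u) (v := v) hd hchar hne
      (fun t ht ↦ ⟨(Finsupp.mem_supported K r).1 hr ht, Nat.lt_succ_of_le (Finset.le_sup ht)⟩)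
      (fun x hx ↦ hN hx) (fun P _ ↦ by rw [hr0, Pi.zero_apply])
  rw [hNM] at hlt
  exact hlt.not_ge (Nat.le_mul_of_pos_right _ (by positivity))

lemma monomial_notMem_reducedSpan [IsAlgClosed L] (hd : 0 < d) (hchar : ((d + 1 : ℕ) : L) = 0)
    (hu : u ≠ 0) (t : ℕ × ℕ × ℕ) : monomial L d u v t ∉ reducedSpan L d u v (poleWeight d t) := by
  intro hmem
  obtain ⟨s, hs, hst, α, hα, hsub⟩ :=
    exists_monomial_sub_smul_mem_reducedSpan (L := L) (v := v) hd hu t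
  have hs_mem : monomial L d u v s ∈ reducedSpan L d u v (poleWeight d t) := by
    have := sub_mem hmem hsub
    rwa [sub_sub_cancel, Submodule.smul_mem_iff _ hα] at this
  have hsubset : {t' | IsReducedExponent d t' ∧ poleWeight d t' < poleWeight d t} ⊆
      {t' | IsReducedExponent d t'} \ {s} := by
    rintro t' ⟨ht', hlt⟩
    exact ⟨ht', fun h ↦ hlt.ne (h ▸ hst)⟩
  exact (linearIndepOn_monomial (K := K) hd hchar).notMem_span hs
    (Submodule.span_mono (Set.image_mono hsubset) hs_mem)

lemma linearIndependent_monomial_of_injective [IsAlgClosed L] (hd : 0 < d)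
    (hchar : ((d + 1 : ℕ) : L) = 0) (hu : u ≠ 0) {ι : Type*} {E : ι → ℕ × ℕ × ℕ}
    (hE : Function.Injective (poleWeight d ∘ E)) :
    LinearIndependent K (monomial L d u v ∘ E) := by
  classical
  rw [linearIndependent_iff']
  intro s g hg
  by_contra! ⟨i, hi, hgi⟩
  obtain ⟨m, hm, hmax⟩ := Finset.exists_max_image {i ∈ s | g i ≠ 0} (poleWeight d ∘ E)
    ⟨i, Finset.mem_filter.2 ⟨hi, hgi⟩⟩
  obtain ⟨hms, hgm⟩ := Finset.mem_filter.1 hm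
  refine monomial_notMem_reducedSpan (L := L) (v := v) hd hchar hu (E m) ?_
  have hsum : -(g m • monomial L d u v (E m)) = ∑ i ∈ s.erase m, g i • monomial L d u v (E i) :=
    neg_eq_of_add_eq_zero_right
      ((Finset.add_sum_erase s (fun i ↦ g i • monomial L d u v (E i)) hms).trans hg)
  rw [← Submodule.smul_mem_iff _ hgm, ← neg_mem_iff, hsum]
  refine sum_mem fun j hj ↦ ?_
  obtain ⟨hjm, hjs⟩ := Finset.mem_erase.1 hj
  by_cases hgj : g j = 0
  · simp [hgj]
  refine Submodule.smul_mem _ _ (reducedSpan_mono (Nat.succ_le_of_lt ?_)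
    (weightSpan_le_reducedSpan hd hu _ (monomial_mem_weightSpan le_rfl)))
  exact (hmax j (Finset.mem_filter.2 ⟨hjs, hgj⟩)).lt_of_ne (hE.ne hjm)

end Vanishing

end CurvePoint

/-! ### Stepanov's method -/

lemma exists_sum_smul_eq_zero_of_finrank_lt_card {K V ι : Type*} [Field K] [AddCommGroup V]
    [Module K V] {W : Submodule K V} [Module.Finite K W] {s : Finset ι} {f : ι → V}
    (hf : ∀ i ∈ s, f i ∈ W) (hcard : Module.finrank K W < s.card) :
    ∃ g : ι → K, (∃ i ∈ s, g i ≠ 0) ∧ ∑ i ∈ s, g i • f i = 0 := by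
  have hdep : ¬ LinearIndepOn K f s := fun hli ↦ by
    have hliW : LinearIndependent K fun i : s ↦ (⟨f i, hf i i.2⟩ : W) :=
      LinearIndependent.of_comp W.subtype hli
    exact hcard.not_ge (by simpa using hliW.fintype_card_le_finrank)
  rw [linearIndepOn_finset_iff] at hdep
  push Not at hdep
  obtain ⟨g, hg, i, hi, hgi⟩ := hdep
  exact ⟨g, ⟨i, hi, hgi⟩, hg⟩

namespace CurvePoint

section Stepanov

variable {K L : Type*} [Field K] [Field L] [Algebra K L] {d : ℕ} {u v : K}

variable (L d u v) in
/-- The monomial with exponents `t` composed with the map `(x, y, z) ↦ (x, c * y, z + τ * x)`. -/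
def twistedMonomial (c τ : K) (t : ℕ × ℕ × ℕ) : CurvePoint L d u v → L :=
  fun P ↦ P.x ^ t.1 * (algebraMap K L c * P.y) ^ t.2.1 * (P.z + algebraMap K L τ * P.x) ^ t.2.2

/-- The `q`-power Frobenius acts on the point `P` as the map
`(x, y, z) ↦ (x, c * y, z + τ * x)`. -/
structure IsFrobeniusTwist (q : ℕ) (c τ : K) (P : CurvePoint L d u v) : Prop where
  x_pow : P.x ^ q = P.x
  y_pow : P.y ^ q = algebraMap K L c * P.y
  z_pow : P.z ^ q = P.z + algebraMap K L τ * P.x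

lemma IsFrobeniusTwist.monomial_pow {q : ℕ} {c τ : K} {P : CurvePoint L d u v}
    (hP : P.IsFrobeniusTwist q c τ) (t : ℕ × ℕ × ℕ) :
    monomial L d u v t P ^ q = twistedMonomial L d u v c τ t P := by
  simp only [monomial, twistedMonomial, mul_pow, ← hP.z_pow, ← hP.y_pow, pow_right_comm _ _ q]
  rw [hP.x_pow]

lemma twistedMonomial_mem_weightSpan (c τ : K) (t : ℕ × ℕ × ℕ) :
    twistedMonomial L d u v c τ t ∈ weightSpan L d u v (poleWeight d t) := by
  set x := monomial L d u v (1, 0, 0) with hx_def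
  set y := monomial L d u v (0, 1, 0) with hy_def
  set z := monomial L d u v (0, 0, 1) with hz_def
  have hx : x ∈ weightSpan L d u v (d * (d + 1)) := monomial_mem_weightSpan (by simp [poleWeight])
  have hy : c • y ∈ weightSpan L d u v ((d + 1) ^ 2) :=
    Submodule.smul_mem _ _ (monomial_mem_weightSpan (by simp [poleWeight]))
  have hz : z + τ • x ∈ weightSpan L d u v (d * (d + 2)) :=
    add_mem (monomial_mem_weightSpan (by simp [poleWeight]))
      (Submodule.smul_mem _ _ (weightSpan_mono (by gcongr; lia) hx))
  have htwist : twistedMonomial L d u v c τ t =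
      x ^ t.1 * (c • y) ^ t.2.1 * (z + τ • x) ^ t.2.2 := by
    funext P
    simp only [twistedMonomial, hx_def, hy_def, hz_def, Pi.mul_apply, Pi.pow_apply, Pi.smul_apply,
      Pi.add_apply, monomial]
    simp only [Algebra.smul_def, pow_zero, pow_one, one_mul, mul_one]
  rw [htwist]
  exact mul_mem_weightSpan (mul_mem_weightSpan (pow_mem_weightSpan hx _) (pow_mem_weightSpan hy _))
    (pow_mem_weightSpan hz _)

lemma sum_smul_monomial_pow_eq {p e : ℕ} [ExpChar L p] {c τ : K} {P : CurvePoint L d u v}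
    (hP : P.IsFrobeniusTwist (p ^ e * p ^ e) c τ) {ι : Type*} (s : Finset ι) (g : ι → K)
    (A B : ι → ℕ × ℕ × ℕ) :
    (∑ i ∈ s, g i • monomial L d u v (A i + p ^ e • B i)) P ^ p ^ e =
      (∑ i ∈ s, g i ^ p ^ e •
        (monomial L d u v (A i) ^ p ^ e * twistedMonomial L d u v c τ (B i))) P := by
  rw [Finset.sum_apply, Finset.sum_apply, sum_pow_char_pow]
  refine Finset.sum_congr rfl fun i _ ↦ ?_
  rw [← monomial_mul, ← CurvePoint.monomial_pow]
  simp only [Pi.smul_apply, Pi.mul_apply, Pi.pow_apply, ← hP.monomial_pow]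
  simp only [Algebra.smul_def, map_pow]
  ring

lemma lt_card_Icc_product_Ico {κ R : ℕ} (hR : κ ^ 2 + 3 * κ + 1 < R) :
    R * (R - 1) + (R + 2 * κ) + 1 < (Finset.Icc κ (R + 2 * κ) ×ˢ Finset.Ico κ R).card := by
  obtain ⟨a, rfl⟩ : ∃ a, R = κ + a + 1 := Nat.exists_eq_add_of_lt (by nlinarith)
  rw [Finset.card_product, Nat.card_Icc, Nat.card_Ico,
    show κ + a + 1 + 2 * κ + 1 - κ = 2 * κ + a + 2 by lia, show κ + a + 1 - κ = a + 1 by lia,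
    Nat.add_sub_cancel]
  nlinarith

lemma exists_sum_smul_pow_mul_twistedMonomial_eq_zero (hd : 0 < d) (hu : u ≠ 0) (c τ : K)
    {κ R : ℕ} (hR : κ ^ 2 + 3 * κ + 1 < R) {T : ℕ → ℕ × ℕ × ℕ}
    (hT : ∀ w, κ ≤ w → poleWeight d (T w) = w) :
    ∃ g : ℕ × ℕ → K, (∃ s ∈ Finset.Icc κ (R + 2 * κ) ×ˢ Finset.Ico κ R, g s ≠ 0) ∧
      ∑ s ∈ Finset.Icc κ (R + 2 * κ) ×ˢ Finset.Ico κ R,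
        g s • (monomial L d u v (T s.2) ^ R * twistedMonomial L d u v c τ (T s.1)) = 0 := by
  refine exists_sum_smul_eq_zero_of_finrank_lt_card
    (W := reducedSpan L d u v (R * (R - 1) + (R + 2 * κ) + 1)) (fun s hs ↦ ?_)
    ((finrank_reducedSpan_le _).trans_lt (lt_card_Icc_product_Ico hR))
  simp only [Finset.mem_product, Finset.mem_Icc, Finset.mem_Ico] at hs
  obtain ⟨⟨hκ₁, hle₁⟩, hκ₂, hlt₂⟩ := hs
  have hmon : monomial L d u v (T s.2) ∈ weightSpan L d u v (R - 1) :=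
    monomial_mem_weightSpan (by rw [hT _ hκ₂]; lia)
  have htwist : twistedMonomial L d u v c τ (T s.1) ∈ weightSpan L d u v (R + 2 * κ) :=
    weightSpan_mono ((hT _ hκ₁).trans_le hle₁) (twistedMonomial_mem_weightSpan c τ (T s.1))
  exact weightSpan_le_reducedSpan hd hu _ (mul_mem_weightSpan (pow_mem_weightSpan hmon R) htwist)

lemma injOn_poleWeight_add_nsmul {κ R : ℕ} {T : ℕ → ℕ × ℕ × ℕ}
    (hT : ∀ w, κ ≤ w → poleWeight d (T w) = w) :
    Set.InjOn (fun s : ℕ × ℕ ↦ poleWeight d (T s.2 + R • T s.1)) (Set.Ici κ ×ˢ Set.Ico κ R) := by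
  rintro ⟨a, b⟩ ⟨ha, hb⟩ ⟨a', b'⟩ ⟨ha', hb'⟩ h
  simp only [poleWeight_add, poleWeight_nsmul, hT _ ha, hT _ ha', hT _ hb.1, hT _ hb'.1] at h
  have hmod := congrArg (· % R) h
  have hdiv := congrArg (· / R) h
  have hR : 0 < R := (Nat.zero_le b).trans_lt hb.2
  simp only [Nat.add_mul_mod_self_left, Nat.add_mul_div_left _ _ hR, Nat.mod_eq_of_lt hb.2,
    Nat.mod_eq_of_lt hb'.2, Nat.div_eq_of_lt hb.2, Nat.div_eq_of_lt hb'.2, zero_add] at hmod hdiv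
  rw [hmod, hdiv]

/-- The relation of `exists_sum_smul_pow_mul_twistedMonomial_eq_zero` is the `R`-th power, on the
points where the `R * R`-power Frobenius acts as the twist, of a combination of monomials with
distinct weights. -/
lemma exists_mem_reducedSpan_vanishing_of_isFrobeniusTwist [IsAlgClosed L] {p e : ℕ} [ExpChar K p]
    [ExpChar L p] [PerfectRing K p] (hd : 0 < d) (hchar : ((d + 1 : ℕ) : L) = 0) (hu : u ≠ 0)
    (c τ : K) {κ : ℕ} (hκ : 2 * (d + 1) ^ 3 ≤ κ) (hR : κ ^ 2 + 3 * κ + 1 < p ^ e) :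
    ∃ G : CurvePoint L d u v → L, G ≠ 0 ∧
      G ∈ reducedSpan L d u v (p ^ e * p ^ e + (2 * κ + 1) * p ^ e) ∧
      ∀ P, P.IsFrobeniusTwist (p ^ e * p ^ e) c τ → G P = 0 := by
  have hexists (w : ℕ) (hw : κ ≤ w) : ∃ t, poleWeight d t = w :=
    (exists_isReducedExponent_poleWeight_eq hd (hκ.trans hw)).imp fun _ ht ↦ ht.2
  choose! T hT using hexists
  set S := Finset.Icc κ (p ^ e + 2 * κ) ×ˢ Finset.Ico κ (p ^ e)
  obtain ⟨g, ⟨s₀, hs₀, hgs₀⟩, hg⟩ :=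
    exists_sum_smul_pow_mul_twistedMonomial_eq_zero (L := L) (v := v) hd hu c τ hR hT
  choose C hC using fun s ↦ (iterateFrobeniusEquiv K p e).surjective (g s)
  simp only [iterateFrobeniusEquiv_def] at hC
  refine ⟨∑ s ∈ S, C s • monomial L d u v (T s.2 + p ^ e • T s.1), fun hG0 ↦ ?_, ?_, fun P hP ↦ ?_⟩
  · have hinj : Set.InjOn (fun s : ℕ × ℕ ↦ poleWeight d (T s.2 + p ^ e • T s.1)) S :=
      (injOn_poleWeight_add_nsmul hT).mono fun s hs ↦ by
        simp only [S, Finset.coe_product, Finset.coe_Icc, Finset.coe_Ico] at hs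
        exact ⟨hs.1.1, hs.2⟩
    have hli : LinearIndepOn K (fun s : ℕ × ℕ ↦ monomial L d u v (T s.2 + p ^ e • T s.1)) S :=
      linearIndependent_monomial_of_injective hd hchar hu hinj.injective
    have hC0 : C s₀ = 0 := linearIndepOn_finset_iff.1 hli C hG0 s₀ hs₀
    exact hgs₀ (by rw [← hC, hC0, zero_pow (by lia)])
  · refine sum_mem fun s hs ↦ Submodule.smul_mem _ _ ?_
    simp only [S, Finset.mem_product, Finset.mem_Icc, Finset.mem_Ico] at hs
    obtain ⟨⟨hκ₁, hle₁⟩, hκ₂, hlt₂⟩ := hs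
    refine reducedSpan_mono ?_
      (weightSpan_le_reducedSpan hd hu _ (monomial_mem_weightSpan le_rfl))
    rw [poleWeight_add, poleWeight_nsmul, hT _ hκ₁, hT _ hκ₂]
    nlinarith
  · refine pow_eq_zero_iff (by lia) |>.1 (sum_smul_monomial_pow_eq hP S C _ _ |>.trans ?_)
    simp only [hC, S, hg, Pi.zero_apply]

theorem card_mul_lt_of_forall_isFrobeniusTwist [IsAlgClosed L] {p e : ℕ} [ExpChar K p]
    [ExpChar L p] [PerfectRing K p] (hd : 0 < d) (hchar : ((d + 1 : ℕ) : L) = 0) (hu : u ≠ 0)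
    {c τ : K} {κ : ℕ} (hκ : 2 * (d + 1) ^ 3 ≤ κ) (hR : κ ^ 2 + 3 * κ + 1 < p ^ e)
    {N : Finset L} (hN : ∀ x ∈ N, x ≠ 0 ∧ x ^ 2 + 1 ≠ 0)
    (htwist : ∀ P : CurvePoint L d u v, P.x ∈ N → P.IsFrobeniusTwist (p ^ e * p ^ e) c τ) :
    N.card * (d * (d + 1)) < p ^ e * p ^ e + (2 * κ + 1) * p ^ e := by
  obtain ⟨G, hG, hmem, hvanish⟩ := exists_mem_reducedSpan_vanishing_of_isFrobeniusTwist
    (L := L) (v := v) hd hchar hu c τ hκ hR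
  exact card_mul_lt_of_mem_reducedSpan hd hchar hG hmem hN fun P hP ↦ hvanish P (htwist P hP)

end Stepanov

end CurvePoint

lemma pow_pow_eq_add_sum_pow {L : Type*} [CommSemiring L] {p f : ℕ} [ExpChar L p] {ζ g : L}
    (h : ζ ^ p ^ f = ζ + g) (i : ℕ) :
    ζ ^ (p ^ f) ^ i = ζ + ∑ j ∈ Finset.range i, g ^ (p ^ f) ^ j := by
  induction i with
  | zero => simp
  | succ i ih =>
    rw [pow_succ', pow_mul, h, Finset.sum_range_succ, ← add_assoc, ← ih, ← pow_mul p,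
      add_pow_expChar_pow]

namespace CurvePoint

section Frobenius

variable {F K L : Type*} [Field F] [Fintype F] [Field K] [Fintype K] [Algebra F K] [Field L]
  [Algebra K L] {d : ℕ} {u v : K}

lemma y_pow_card (hF : Fintype.card F = d + 1) {P : CurvePoint L d u v} {x : K}
    (hP : P.x = algebraMap K L x) (hx : x ≠ 0) :
    P.y ^ Fintype.card K = algebraMap K L (algebraMap F K (Algebra.norm F (x + x⁻¹))) * P.y := by
  obtain ⟨d, rfl⟩ := Nat.exists_eq_add_one.2 (by have := Fintype.one_lt_card (α := F); lia : 0 < d)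
  obtain ⟨m, hm⟩ : d + 1 ∣ Fintype.card K - 1 := by
    rw [Module.card_eq_pow_finrank (K := F) (V := K), hF]
    simpa using Nat.sub_dvd_pow_sub_pow (d + 1 + 1) 1 (Module.finrank F K)
  have hcard : Fintype.card K = (d + 1) * m + 1 := by
    have := Fintype.card_pos (α := K)
    lia
  have hnorm : algebraMap F K (Algebra.norm F (x + x⁻¹)) = (x + x⁻¹) ^ m := by
    rw [FiniteField.algebraMap_norm_eq_pow, Nat.card_eq_fintype_card, Nat.card_eq_fintype_card,
      hF, hm, Nat.add_sub_cancel, Nat.mul_div_cancel_left _ d.succ_pos]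
  have hy : P.y ^ (d + 1) = algebraMap K L (x ^ (d + 1) * (x + x⁻¹)) := by
    rw [P.y_pow, hP, Nat.add_sub_cancel, ← map_pow, ← map_pow, ← map_add]
    congr 1
    field_simp
    ring
  have hxm : (x ^ (d + 1)) ^ m = 1 := by
    rw [← pow_mul, ← hm, FiniteField.pow_card_sub_one_eq_one x hx]
  rw [hcard, pow_succ, pow_mul, hy, hnorm, ← map_pow, mul_pow, hxm, one_mul]

lemma z_pow_card (hF : Fintype.card F = d + 1) {P : CurvePoint L d u v} {x : K}
    (hP : P.x = algebraMap K L x) (hx : x ≠ 0) :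
    P.z ^ Fintype.card K =
      P.z + algebraMap K L (algebraMap F K (Algebra.trace F K (u * x + v * x⁻¹))) * P.x := by
  obtain ⟨p, hp⟩ := CharP.exists F
  obtain ⟨f, hpp, hcard⟩ := FiniteField.card F p
  have : Fact p.Prime := ⟨hpp⟩
  have : CharP K p := charP_of_injective_algebraMap (algebraMap F K).injective p
  have : CharP L p := charP_of_injective_algebraMap (algebraMap K L).injective p
  have hxL : algebraMap K L x ≠ 0 := by simpa using hx
  -- the second equation of the curve becomes an Artin-Schreier equation for `z / x`
  have hζ : (P.z / P.x) ^ p ^ (f : ℕ) = P.z / P.x + algebraMap K L (u * x + v * x⁻¹) := by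
    rw [← hcard, hF, div_pow, P.z_pow, hP]
    simp only [map_add, map_mul, map_inv₀]
    field_simp
    ring
  have htrace := pow_pow_eq_add_sum_pow hζ (Module.finrank F K)
  rw [← hcard, ← Module.card_eq_pow_finrank, div_pow, hP, ← map_pow, FiniteField.pow_card] at htrace
  simp only [← map_pow, ← map_sum, ← Nat.card_eq_fintype_card (α := F),
    ← FiniteField.algebraMap_trace_eq_sum_pow] at htrace
  rw [(div_eq_iff hxL).1 htrace, add_mul, div_mul_cancel₀ _ hxL, hP]

lemma isFrobeniusTwist_card (hF : Fintype.card F = d + 1) {P : CurvePoint L d u v} {x : K}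
    (hP : P.x = algebraMap K L x) (hx : x ≠ 0) :
    P.IsFrobeniusTwist (Fintype.card K) (algebraMap F K (Algebra.norm F (x + x⁻¹)))
      (algebraMap F K (Algebra.trace F K (u * x + v * x⁻¹))) where
  x_pow := by rw [hP, ← map_pow, FiniteField.pow_card]
  y_pow := y_pow_card hF hP hx
  z_pow := z_pow_card hF hP hx

end Frobenius

end CurvePoint

lemma ne_zero_and_sq_add_one_ne_zero {K : Type*} [Field K] {x : K} (hx : x + x⁻¹ ≠ 0) :
    x ≠ 0 ∧ x ^ 2 + 1 ≠ 0 := by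
  have hx0 : x ≠ 0 := by
    rintro rfl
    simp at hx
  refine ⟨hx0, fun hsq ↦ hx ?_⟩
  field_simp
  rw [hsq, mul_zero]

section FibreCount

variable {F K : Type*} [Field F] [Fintype F] [DecidableEq F] [Field K] [Fintype K] [Algebra F K]

theorem card_norm_eq_and_trace_eq_mul_le {h : ℕ}
    (hK : Fintype.card K = Fintype.card F ^ (2 * h)) {u : K} (hu : u ≠ 0) (v : K) {c : F}
    (hc : c ≠ 0) (τ : F) {κ : ℕ} (hκ : 2 * Fintype.card F ^ 3 ≤ κ)
    (hbig : κ ^ 2 + 3 * κ + 1 < Fintype.card F ^ h) :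
    (Finset.univ.filter fun x : K ↦ Algebra.norm F (x + x⁻¹) = c ∧
      Algebra.trace F K (u * x + v * x⁻¹) = τ).card * ((Fintype.card F - 1) * Fintype.card F) ≤
      Fintype.card F ^ (2 * h) + (2 * κ + 1) * Fintype.card F ^ h := by
  classical
  obtain ⟨p, hp⟩ := CharP.exists F
  obtain ⟨f, hpp, hcard⟩ := FiniteField.card F p
  have : Fact p.Prime := ⟨hpp⟩
  have : CharP K p := charP_of_injective_algebraMap (algebraMap F K).injective p
  set L := AlgebraicClosure K
  have : CharP L p := charP_of_injective_algebraMap (algebraMap K L).injective p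
  obtain ⟨d, hF⟩ : ∃ d, Fintype.card F = d + 1 := Nat.exists_eq_add_one.2 Fintype.card_pos
  have hd : 0 < d := by have := Fintype.one_lt_card (α := F); lia
  have hpow : Fintype.card F ^ h = p ^ (f * h : ℕ) := by rw [hcard, pow_mul]
  have hchar : ((d + 1 : ℕ) : L) = 0 := by
    rw [← hF, hcard, Nat.cast_pow, CharP.cast_eq_zero, zero_pow f.pos.ne']
  have hne {x : K} (hx : Algebra.norm F (x + x⁻¹) = c) : x ≠ 0 ∧ x ^ 2 + 1 ≠ 0 :=
    ne_zero_and_sq_add_one_ne_zero fun h0 ↦ hc (by rw [← hx, h0, Algebra.norm_zero])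
  have hcount := CurvePoint.card_mul_lt_of_forall_isFrobeniusTwist (L := L) (v := v)
    (c := algebraMap F K c) (τ := algebraMap F K τ) hd hchar hu (hF ▸ hκ) (hpow ▸ hbig)
    (N := (Finset.univ.filter fun x : K ↦ Algebra.norm F (x + x⁻¹) = c ∧
      Algebra.trace F K (u * x + v * x⁻¹) = τ).image (algebraMap K L)) ?_ fun P hP ↦ ?_
  · rw [Finset.card_image_of_injective _ (algebraMap K L).injective, ← hpow, ← pow_add,
      ← two_mul] at hcount
    simpa only [hF, Nat.add_sub_cancel] using hcount.le
  · simp only [Finset.mem_image, Finset.mem_filter, Finset.mem_univ, true_and]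
    rintro _ ⟨x, ⟨hx, -⟩, rfl⟩
    rw [← map_pow, ← map_one (algebraMap K L), ← map_add]
    simpa only [ne_eq, map_eq_zero] using hne hx
  · simp only [Finset.mem_image, Finset.mem_filter, Finset.mem_univ, true_and] at hP
    obtain ⟨x, ⟨hx, rfl⟩, hxP⟩ := hP
    have htwist := CurvePoint.isFrobeniusTwist_card hF hxP.symm (hne hx).1
    rwa [hx, hK, two_mul, pow_add, hpow] at htwist

end FibreCount

section CharacterSum

lemma norm_mulChar_apply_le_one {F : Type*} [Field F] [Finite F] (χ : MulChar F ℂ) (a : F) :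
    ‖χ a‖ ≤ 1 := by
  rcases eq_or_ne a 0 with rfl | ha
  · rw [MulChar.map_zero, norm_zero]
    exact zero_le_one
  · have := Fintype.ofFinite F
    classical
    simpa using (Complex.norm_eq_one_of_mem_rootsOfUnity
      (χ.apply_mem_rootsOfUnity (Units.mk0 a ha))).le

lemma card_add_inv_eq_zero_le {K : Type*} [Field K] [Fintype K] [DecidableEq K] :
    (Finset.univ.filter fun x : K ↦ x + x⁻¹ = 0).card ≤ 3 := by
  have h0 : (X * (X ^ 2 + 1) : K[X]) ≠ 0 := mul_ne_zero X_ne_zero (Monic.ne_zero (by monicity!))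
  have hsub : (Finset.univ.filter fun x : K ↦ x + x⁻¹ = 0).val ⊆
      (X * (X ^ 2 + 1) : K[X]).roots := fun x hx ↦ by
    replace hx : x + x⁻¹ = 0 := (Finset.mem_filter.1 hx).2
    rw [mem_roots h0]
    rcases eq_or_ne x 0 with rfl | hx0
    · simp
    · field_simp at hx
      simp [hx]
  exact (card_le_degree_of_subset_roots hsub).trans (by compute_degree)

/-- The upper bounds on the fibres add up to nearly the total, so each fibre has size nearly `B`. -/
lemma norm_sum_comp_le {α β : Type*} [Fintype α] [DecidableEq β] {T : Finset β} {w : β → ℂ}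
    (hw : ∀ b, ‖w b‖ ≤ 1) (hwT : ∀ b ∉ T, w b = 0) (hsum : ∑ b ∈ T, w b = 0) {B : ℝ} {a : α → β}
    (hB : ∀ b ∈ T, ((Finset.univ.filter fun x ↦ a x = b).card : ℝ) ≤ B) :
    ‖∑ x, w (a x)‖ ≤ T.card * B - (Finset.univ.filter fun x ↦ a x ∈ T).card := by
  set N : β → ℝ := fun b ↦ (Finset.univ.filter fun x ↦ a x = b).card
  have hfibre {b : β} (hb : b ∈ T) :
      (Finset.univ.filter fun x ↦ a x ∈ T).filter (fun x ↦ a x = b) =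
        Finset.univ.filter fun x ↦ a x = b := by
    rw [Finset.filter_filter]
    exact Finset.filter_congr fun x _ ↦ and_iff_right_of_imp fun hx ↦ hx ▸ hb
  have hmaps : ∀ x ∈ Finset.univ.filter fun x ↦ a x ∈ T, a x ∈ T := fun x hx ↦
    (Finset.mem_filter.1 hx).2
  have hcard : ((Finset.univ.filter fun x ↦ a x ∈ T).card : ℝ) = ∑ b ∈ T, N b := by
    rw [Finset.card_eq_sum_card_fiberwise hmaps, Nat.cast_sum]
    exact Finset.sum_congr rfl fun b hb ↦ by rw [hfibre hb]
  have hfibres : ∑ x, w (a x) = ∑ b ∈ T, (N b : ℂ) * w b := by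
    rw [← Finset.sum_filter_of_ne (p := fun x ↦ a x ∈ T) fun x _ hx ↦ not_imp_comm.1 (hwT _) hx,
      ← Finset.sum_fiberwise_of_maps_to' hmaps]
    refine Finset.sum_congr rfl fun b hb ↦ ?_
    rw [hfibre hb, Finset.sum_const, nsmul_eq_mul]
    simp [N]
  calc ‖∑ x, w (a x)‖ = ‖∑ b ∈ T, ((N b - B : ℝ) : ℂ) * w b‖ := by
        simp only [hfibres, Complex.ofReal_sub, sub_mul, Finset.sum_sub_distrib, ← Finset.mul_sum,
          hsum, mul_zero, sub_zero]
    _ ≤ ∑ b ∈ T, (B - N b) := by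
        refine norm_sum_le_of_le _ fun b hb ↦ ?_
        rw [norm_mul, Complex.norm_real, Real.norm_eq_abs, abs_sub_comm,
          abs_of_nonneg (sub_nonneg.2 (hB b hb))]
        exact mul_le_of_le_one_right (sub_nonneg.2 (hB b hb)) (hw b)
    _ = _ := by rw [Finset.sum_sub_distrib, Finset.sum_const, nsmul_eq_mul, hcard]

theorem norm_sum_mulChar_norm_mul_addChar_trace_le {F K : Type*} [Field F] [Fintype F] [Field K]
    [Fintype K] [Algebra F K] {h : ℕ} (hK : Fintype.card K = Fintype.card F ^ (2 * h)) {u : K}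
    (hu : u ≠ 0) (v : K) (χ : MulChar F ℂ) {ψ : AddChar F ℂ} (hψ : ψ ≠ 1) {κ : ℕ}
    (hκ : 2 * Fintype.card F ^ 3 ≤ κ) (hbig : κ ^ 2 + 3 * κ + 1 < Fintype.card F ^ h) :
    ‖∑ x : K, χ (Algebra.norm F (x + x⁻¹)) * ψ (Algebra.trace F K (u * x + v * x⁻¹))‖ ≤
      (2 * κ + 4) * (Fintype.card F : ℝ) ^ h := by
  classical
  set q := Fintype.card F with hq
  have hq1 : 1 < q := Fintype.one_lt_card
  have hpos : (0 : ℝ) < (q - 1 : ℕ) * q := by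
    have : 0 < q - 1 := Nat.sub_pos_of_lt hq1
    positivity
  set T : Finset (F × F) := Finset.univ.erase 0 ×ˢ Finset.univ
  have hmem (t : F × F) : t ∈ T ↔ t.1 ≠ 0 := by simp [T]
  have hTcard : (T.card : ℝ) = (q - 1 : ℕ) * q := by
    simp [T, ← hq, Finset.card_product, Finset.card_erase_of_mem]
  have hsum : ∑ t ∈ T, χ t.1 * ψ t.2 = 0 := by
    simp only [T, Finset.sum_product, ← Finset.mul_sum, AddChar.sum_eq_zero_iff_ne_zero.2 hψ,
      mul_zero, Finset.sum_const_zero]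
  have hbound := norm_sum_comp_le (α := K) (T := T) (w := fun t ↦ χ t.1 * ψ t.2)
    (a := fun x ↦ (Algebra.norm F (x + x⁻¹), Algebra.trace F K (u * x + v * x⁻¹)))
    (B := (q ^ (2 * h) + (2 * κ + 1) * q ^ h) / ((q - 1 : ℕ) * q))
    (fun t ↦ by simpa using norm_mulChar_apply_le_one χ t.1)
    (fun t ht ↦ by simp only [not_not.1 (mt (hmem t).2 ht), MulChar.map_zero, zero_mul])
    hsum fun t ht ↦ by
      rw [le_div_iff₀ hpos]
      simp only [Prod.ext_iff]
      exact_mod_cast card_norm_eq_and_trace_eq_mul_le hK hu v ((hmem t).1 ht) t.2 hκ hbig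
  simp only [hmem, ne_eq, Algebra.norm_eq_zero_iff] at hbound
  rw [hTcard, mul_div_cancel₀ _ hpos.ne'] at hbound
  have hcard : (q : ℝ) ^ (2 * h) ≤ 3 + (Finset.univ.filter fun x : K ↦ ¬ x + x⁻¹ = 0).card := by
    rw [← Nat.cast_pow, ← hK, ← Finset.card_univ,
      ← Finset.card_filter_add_card_filter_not (fun x : K ↦ x + x⁻¹ = 0)]
    exact_mod_cast Nat.add_le_add_right card_add_inv_eq_zero_le _
  have hone : (1 : ℝ) ≤ (q : ℝ) ^ h := one_le_pow₀ (by exact_mod_cast hq1.le)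
  linarith

end CharacterSum

/-! ### Power sums and Newton identities -/

section NewtonIdentities

lemma eq_of_newton_identities {R : Type*} [CommRing R] {c S S' : ℕ → R} (hc : c 0 = 1)
    (hS : ∀ k : ℕ, k * c k = ∑ m ∈ Finset.Icc 1 k, S m * c (k - m))
    (hS' : ∀ k : ℕ, k * c k = ∑ m ∈ Finset.Icc 1 k, S' m * c (k - m)) {m : ℕ} (hm : 1 ≤ m) :
    S m = S' m := by
  induction m using Nat.strong_induction_on with
  | _ m ih =>
    obtain ⟨k, rfl⟩ := Nat.exists_eq_add_of_le' hm
    have heq := (hS (k + 1)).symm.trans (hS' (k + 1))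
    rw [Finset.sum_Icc_succ_top (by lia), Finset.sum_Icc_succ_top (by lia), Nat.sub_self, hc,
      mul_one, mul_one] at heq
    refine add_left_cancel (heq.trans ?_)
    congr 1
    refine Finset.sum_congr rfl fun i hi ↦ ?_
    rw [Finset.mem_Icc] at hi
    rw [ih i (by lia) hi.1]

lemma newton_identities_neg_one_pow_mul_esymm {R σ : Type*} [CommRing R] [Fintype σ] (α : σ → R)
    (k : ℕ) :
    (k : R) * ((-1) ^ k * (Finset.univ.val.map α).esymm k) =
      ∑ m ∈ Finset.Icc 1 k,
        -(∑ j, α j ^ m) * ((-1) ^ (k - m) * (Finset.univ.val.map α).esymm (k - m)) := by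
  have hnewton := congrArg (MvPolynomial.aeval α) (MvPolynomial.mul_esymm_eq_sum σ R k)
  simp only [map_mul, map_sum, map_pow, map_neg, map_one, map_natCast, MvPolynomial.psum,
    MvPolynomial.aeval_X, MvPolynomial.aeval_esymm_eq_multiset_esymm] at hnewton
  have hsign : ((-1 : R) ^ k) * (-1) ^ (k + 1) = -1 := by
    rw [← pow_add, Odd.neg_one_pow ⟨k, by ring⟩]
  rw [mul_left_comm, hnewton, ← mul_assoc, hsign, Finset.mul_sum]
  refine Finset.sum_nbij' (fun a ↦ a.2) (fun m ↦ (k - m, m)) ?_ ?_ ?_ ?_ ?_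
  · simp only [Finset.mem_filter, Finset.HasAntidiagonal.mem_antidiagonal, Finset.mem_Icc]
    lia
  · simp only [Finset.mem_filter, Finset.HasAntidiagonal.mem_antidiagonal, Finset.mem_Icc]
    lia
  · simp only [Finset.mem_filter, Finset.HasAntidiagonal.mem_antidiagonal, Prod.ext_iff]
    lia
  · simp
  · rintro ⟨i, m⟩ hi
    rw [Finset.mem_filter, Finset.HasAntidiagonal.mem_antidiagonal] at hi
    rw [show k - m = i by lia]
    ring

lemma exists_map_univ_val_eq {α : Type*} {s : Multiset α} {r : ℕ} (hs : s.card = r) :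
    ∃ f : Fin r → α, Finset.univ.val.map f = s := by
  obtain ⟨l, rfl⟩ : ∃ l : List α, (l : Multiset α) = s := ⟨s.toList, s.coe_toList⟩
  obtain rfl : l.length = r := hs
  exact ⟨l.get, by rw [Fin.univ_val_map, List.ofFn_get]⟩

lemma exists_eq_neg_one_pow_mul_esymm {K : Type*} [Field K] [IsAlgClosed K] {c : ℕ → K} {r : ℕ}
    (hc0 : c 0 = 1) (hc : ∀ k, r < k → c k = 0) :
    ∃ α : Fin r → K, ∀ k, c k = (-1) ^ k * (Finset.univ.val.map α).esymm k := by
  set f : K[X] := ∑ i ∈ Finset.range (r + 1), monomial (r - i) (c i)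
  have hcoeff {k : ℕ} (hk : k ≤ r) : f.coeff (r - k) = c k := by
    simp only [f, finsetSum_coeff, coeff_monomial]
    rw [Finset.sum_eq_single_of_mem k (by simpa [Nat.lt_succ_iff] using hk) fun i hi hik ↦
      if_neg (by rw [Finset.mem_range] at hi; lia), if_pos rfl]
  have hdeg_le : f.natDegree ≤ r := natDegree_sum_le_of_forall_le _ _ fun i _ ↦
    (natDegree_monomial_le _).trans (Nat.sub_le r i)
  have hlead : f.coeff r = 1 := by simpa only [Nat.sub_zero, hc0] using hcoeff (Nat.zero_le r)
  have hdeg : f.natDegree = r := natDegree_eq_of_le_of_coeff_ne_zero hdeg_le (by simp [hlead])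
  have hroots : f.roots.card = r := IsAlgClosed.card_roots_eq_natDegree.trans hdeg
  obtain ⟨α, hα⟩ := exists_map_univ_val_eq hroots
  refine ⟨α, fun k ↦ ?_⟩
  rw [hα]
  rcases le_or_gt k r with hk | hk
  · rw [← hcoeff hk, coeff_eq_esymm_roots_of_card (hroots.trans hdeg.symm) (by lia), hdeg,
      leadingCoeff, hdeg, hlead, one_mul, Nat.sub_sub_self hk]
  · rw [hc k hk, Multiset.esymm, Multiset.powersetCard_eq_empty _ (hroots.trans_lt hk)]
    simp

theorem exists_eq_neg_sum_pow_of_newton_identities {K : Type*} [Field K] [IsAlgClosed K]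
    {c S : ℕ → K} {r : ℕ} (hc0 : c 0 = 1) (hc : ∀ k, r < k → c k = 0)
    (hS : ∀ k : ℕ, k * c k = ∑ m ∈ Finset.Icc 1 k, S m * c (k - m)) :
    ∃ α : Fin r → K, ∀ m, 1 ≤ m → S m = -∑ j, α j ^ m := by
  obtain ⟨α, hα⟩ := exists_eq_neg_one_pow_mul_esymm hc0 hc
  exact ⟨α, fun m hm ↦ eq_of_newton_identities (S' := fun m ↦ -∑ j, α j ^ m) hc0 hS
    (fun k ↦ by simpa only [hα] using newton_identities_neg_one_pow_mul_esymm α k) hm⟩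

end NewtonIdentities

section PowerSums

lemma sum_coeff_mul_sum_pow {R ι : Type*} [CommSemiring R] [Fintype ι] (f : R[X]) (β : ι → R)
    (h : ℕ) :
    ∑ i ∈ Finset.range (f.natDegree + 1), f.coeff i * ∑ j, β j ^ (h + i) =
      ∑ j, β j ^ h * f.eval (β j) := by
  simp only [Finset.mul_sum, eval_eq_sum_range]
  rw [Finset.sum_comm]
  exact Finset.sum_congr rfl fun j _ ↦ Finset.sum_congr rfl fun i _ ↦ by ring

lemma exists_norm_pow_le_of_norm_sum_pow_le {ι : Type*} [Fintype ι] {β : ι → ℂ} {Q C : ℝ} {H : ℕ}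
    (hβ : ∀ h, H ≤ h → ‖∑ j, β j ^ h‖ ≤ C * Q ^ h) (j₀ : ι) :
    ∃ M : ℝ, ∀ h, H ≤ h → ‖β j₀‖ ^ h ≤ M * Q ^ h := by
  classical
  set f : ℂ[X] := Lagrange.basis (Finset.univ.image β) id (β j₀)
  have hf (j : ι) : f.eval (β j) = if β j = β j₀ then 1 else 0 := by
    have hmem (i : ι) : β i ∈ Finset.univ.image β := Finset.mem_image_of_mem β (Finset.mem_univ i)
    split_ifs with hj
    · rw [hj]
      exact Lagrange.eval_basis_self Function.injective_id.injOn (hmem j₀)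
    · exact Lagrange.eval_basis_of_ne (v := id) (Ne.symm hj) (hmem j)
  set n := (Finset.univ.filter fun j ↦ β j = β j₀).card
  have hn : 1 ≤ n := Finset.card_pos.2 ⟨j₀, by simp⟩
  have hsum (h : ℕ) : ∑ j, β j ^ h * f.eval (β j) = n * β j₀ ^ h := by
    simp only [hf, mul_ite, mul_one, mul_zero]
    rw [← Finset.sum_filter, Finset.sum_congr rfl fun j hj ↦ by rw [(Finset.mem_filter.1 hj).2],
      Finset.sum_const, nsmul_eq_mul]
  refine ⟨∑ i ∈ Finset.range (f.natDegree + 1), ‖f.coeff i‖ * (C * Q ^ i), fun h hh ↦ ?_⟩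
  calc ‖β j₀‖ ^ h ≤ n * ‖β j₀‖ ^ h := le_mul_of_one_le_left (by positivity) (by exact_mod_cast hn)
    _ = ‖∑ i ∈ Finset.range (f.natDegree + 1), f.coeff i * ∑ j, β j ^ (h + i)‖ := by
      rw [sum_coeff_mul_sum_pow, hsum, norm_mul, norm_pow, Complex.norm_natCast]
    _ ≤ ∑ i ∈ Finset.range (f.natDegree + 1), ‖f.coeff i‖ * (C * Q ^ (h + i)) :=
      norm_sum_le_of_le _ fun i _ ↦ by
        rw [norm_mul]
        exact mul_le_mul_of_nonneg_left (hβ _ (by lia)) (norm_nonneg _)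
    _ = _ := by
      rw [Finset.sum_mul]
      exact Finset.sum_congr rfl fun i _ ↦ by ring

lemma norm_le_of_norm_sum_pow_le {ι : Type*} [Fintype ι] {β : ι → ℂ} {Q C : ℝ} (hQ : 0 < Q) {H : ℕ}
    (hβ : ∀ h, H ≤ h → ‖∑ j, β j ^ h‖ ≤ C * Q ^ h) (j₀ : ι) : ‖β j₀‖ ≤ Q := by
  obtain ⟨M, hM⟩ := exists_norm_pow_le_of_norm_sum_pow_le hβ j₀
  by_contra! hlt
  have hlarge := (tendsto_pow_atTop_atTop_of_one_lt ((one_lt_div hQ).2 hlt)).eventually_gt_atTop M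
  obtain ⟨h, hgt, hH⟩ := (hlarge.and (Filter.eventually_ge_atTop H)).exists
  rw [div_pow, lt_div_iff₀ (by positivity)] at hgt
  exact hgt.not_ge (hM h hH)

lemma norm_one_le_of_norm_two_mul_le {S : ℕ → ℂ} {r : ℕ} {α : Fin r → ℂ}
    (hS : ∀ m, 1 ≤ m → S m = -∑ j, α j ^ m) {Q C : ℝ} (hQ : 0 < Q) {H : ℕ}
    (hb : ∀ h, H ≤ h → ‖S (2 * h)‖ ≤ C * Q ^ h) : ‖S 1‖ ≤ r * √Q := by
  have hα (j : Fin r) : ‖α j ^ 1‖ ≤ √Q := by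
    have hsq : ‖α j ^ 2‖ ≤ Q := norm_le_of_norm_sum_pow_le (β := fun j ↦ α j ^ 2) (C := C)
      (H := H + 1) hQ (fun h hh ↦ by
        have hh' := hb h (by lia)
        rw [hS _ (by lia), norm_neg] at hh'
        simpa only [← pow_mul] using hh') j
    rw [pow_one]
    exact Real.le_sqrt_of_sq_le (by simpa using hsq)
  rw [hS 1 le_rfl, norm_neg]
  simpa using norm_sum_le_of_le Finset.univ fun j _ ↦ hα j

end PowerSums

/-! ### The `L`-function -/

section LFunction

section Monic

variable (F : Type*) [Field F] [Finite F]

lemma finite_monic_natDegree_eq (n : ℕ) : {f : F[X] | f.Monic ∧ f.natDegree = n}.Finite := by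
  have : Finite (degreeLT F (n + 1)) := Finite.of_equiv _ (degreeLTEquiv F (n + 1)).toEquiv.symm
  refine (Set.toFinite (degreeLT F (n + 1) : Set F[X])).subset ?_
  rintro f ⟨hf, hdeg⟩
  rw [SetLike.mem_coe, mem_degreeLT, ← natDegree_lt_iff_degree_lt hf.ne_zero]
  lia

/-- The monic polynomials of degree `n` over a finite field. -/
noncomputable def monicOfDegree (n : ℕ) : Finset F[X] := (finite_monic_natDegree_eq F n).toFinset

open Classical in
/-- The monic irreducible polynomials of degree at most `n` over a finite field. -/
noncomputable def monicIrreducibles (n : ℕ) : Finset F[X] :=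
  ((Finset.range (n + 1)).biUnion (monicOfDegree F)).filter Irreducible

variable {F}

lemma mem_monicOfDegree {n : ℕ} {f : F[X]} :
    f ∈ monicOfDegree F n ↔ f.Monic ∧ f.natDegree = n := by
  simp [monicOfDegree]

lemma mem_monicIrreducibles {n : ℕ} {f : F[X]} :
    f ∈ monicIrreducibles F n ↔ f.Monic ∧ Irreducible f ∧ f.natDegree ≤ n := by
  simp only [monicIrreducibles, Finset.mem_filter, Finset.mem_biUnion, Finset.mem_range,
    mem_monicOfDegree, Nat.lt_succ_iff]
  grind

end Monic

section Factorization

open UniqueFactorizationMonoid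

variable {F : Type*} [Field F]

open Classical in
lemma pow_dvd_iff_le_count_normalizedFactors {f π : F[X]} (hf : f ≠ 0) (hπ : π.Monic)
    (hirr : Irreducible π) (j : ℕ) : π ^ j ∣ f ↔ j ≤ (normalizedFactors f).count π := by
  rw [pow_dvd_iff_le_emultiplicity, emultiplicity_eq_count_normalizedFactors hirr hf,
    hπ.normalize_eq_self, Nat.cast_le]

open Classical in
lemma natDegree_eq_sum_map_normalizedFactors {f : F[X]} (hf : f.Monic) :
    f.natDegree = ((normalizedFactors f).map natDegree).sum := by
  rw [← natDegree_multiset_prod_of_monic _ fun π hπ ↦ ?_, prod_normalizedFactors_eq hf.ne_zero,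
    hf.normalize_eq_self]
  rw [← normalize_normalized_factor π hπ]
  exact monic_normalize (irreducible_of_normalized_factor π hπ).ne_zero

open Classical in
lemma sum_Icc_pow_dvd_eq_count_mul_natDegree {f π : F[X]} (hf : f ≠ 0) (hπ : π.Monic)
    (hirr : Irreducible π) :
    (∑ j ∈ Finset.Icc 1 f.natDegree, if π ^ j ∣ f then π.natDegree else 0) =
      (normalizedFactors f).count π * π.natDegree := by
  have hdvd := pow_dvd_iff_le_count_normalizedFactors hf hπ hirr
  have hcount : (normalizedFactors f).count π ≤ f.natDegree := by
    have hle := natDegree_le_of_dvd ((hdvd _).2 le_rfl) hf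
    rw [natDegree_pow] at hle
    exact (Nat.le_mul_of_pos_right _ hirr.natDegree_pos).trans hle
  have hfilter : (Finset.Icc 1 f.natDegree).filter (fun j ↦ π ^ j ∣ f) =
      Finset.Icc 1 ((normalizedFactors f).count π) := by
    ext j
    simp only [Finset.mem_filter, Finset.mem_Icc, hdvd]
    lia
  rw [← Finset.sum_filter, hfilter, Finset.sum_const, Nat.card_Icc, smul_eq_mul,
    Nat.add_sub_cancel]

open Classical in
lemma natDegree_eq_sum_pow_dvd [Finite F] {f : F[X]} (hf : f.Monic) :
    f.natDegree = ∑ π ∈ monicIrreducibles F f.natDegree,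
      ∑ j ∈ Finset.Icc 1 f.natDegree, if π ^ j ∣ f then π.natDegree else 0 := by
  conv_lhs => rw [natDegree_eq_sum_map_normalizedFactors hf, Finset.sum_multiset_map_count]
  rw [Finset.sum_congr rfl fun π hπ ↦ sum_Icc_pow_dvd_eq_count_mul_natDegree hf.ne_zero
    (mem_monicIrreducibles.1 hπ).1 (mem_monicIrreducibles.1 hπ).2.1]
  refine Finset.sum_subset (fun π hπ ↦ ?_) fun π _ hπ ↦ ?_
  · rw [Multiset.mem_toFinset] at hπ
    have hirr := irreducible_of_normalized_factor π hπ
    refine mem_monicIrreducibles.2 ⟨?_, hirr, natDegree_le_of_dvd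
      (dvd_of_mem_normalizedFactors hπ) hf.ne_zero⟩
    rw [← normalize_normalized_factor π hπ]
    exact monic_normalize hirr.ne_zero
  · rw [Multiset.mem_toFinset] at hπ
    rw [Multiset.count_eq_zero_of_notMem hπ, zero_smul]

end Factorization

lemma sum_Icc_ite_dvd {M : Type*} [AddCommMonoid M] {d : ℕ} (hd : 0 < d) (k : ℕ) (f : ℕ → M) :
    (∑ m ∈ Finset.Icc 1 k, if d ∣ m then f m else 0) =
      ∑ j ∈ Finset.Icc 1 k, if j * d ≤ k then f (j * d) else 0 := by
  rw [← Finset.sum_filter, ← Finset.sum_filter]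
  refine Finset.sum_nbij' (· / d) (· * d) ?_ ?_ ?_ ?_ ?_
  · simp only [Finset.mem_filter, Finset.mem_Icc]
    rintro m ⟨⟨hm, hmk⟩, hdm⟩
    rw [Nat.div_mul_cancel hdm]
    exact ⟨⟨Nat.div_pos (Nat.le_of_dvd hm hdm) hd, (Nat.div_le_self m d).trans hmk⟩, hmk⟩
  · simp only [Finset.mem_filter, Finset.mem_Icc]
    rintro j ⟨⟨hj, -⟩, hjk⟩
    exact ⟨⟨Nat.mul_pos hj hd, hjk⟩, dvd_mul_left d j⟩
  · exact fun m hm ↦ Nat.div_mul_cancel (Finset.mem_filter.1 hm).2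
  · exact fun j _ ↦ Nat.mul_div_cancel j hd
  · exact fun m hm ↦ by rw [Nat.div_mul_cancel (Finset.mem_filter.1 hm).2]

/-- Complete multiplicativity on monic polynomials, so that `Λ` plays the role of a Hecke character
of the rational function field. Nothing is required of `Λ` on other polynomials. -/
structure IsMonicMultiplicative {F R : Type*} [Semiring F] [MulOneClass R] (Λ : F[X] → R) :
    Prop where
  map_one : Λ 1 = 1
  map_mul : ∀ {f g : F[X]}, f.Monic → g.Monic → Λ (f * g) = Λ f * Λ g

lemma IsMonicMultiplicative.map_pow {F R : Type*} [Semiring F] [Monoid R] {Λ : F[X] → R}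
    (hΛ : IsMonicMultiplicative Λ) {f : F[X]} (hf : f.Monic) (j : ℕ) : Λ (f ^ j) = Λ f ^ j := by
  induction j with
  | zero => simp [hΛ.map_one]
  | succ j ih => rw [pow_succ, hΛ.map_mul (hf.pow j) hf, ih, pow_succ]

variable {F R : Type*} [Field F] [Finite F] [CommRing R]

/-- The coefficient of `T ^ k` in the `L`-series `∑ Λ f * T ^ deg f` over the monic polynomials. -/
noncomputable def lCoeff (Λ : F[X] → R) (k : ℕ) : R := ∑ f ∈ monicOfDegree F k, Λ f

/-- The coefficient of `T ^ m` in `T * L' / L`, where `L` is the `L`-series of `Λ`. -/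
noncomputable def lPowerSum (Λ : F[X] → R) (m : ℕ) : R :=
  ∑ π ∈ (monicIrreducibles F m).filter (fun π ↦ π.natDegree ∣ m),
    π.natDegree * Λ π ^ (m / π.natDegree)

lemma lPowerSum_eq_sum_ite (Λ : F[X] → R) {m k : ℕ} (hm : 1 ≤ m) (hmk : m ≤ k) :
    lPowerSum Λ m = ∑ π ∈ monicIrreducibles F k,
      if π.natDegree ∣ m then π.natDegree * Λ π ^ (m / π.natDegree) else 0 := by
  rw [lPowerSum, ← Finset.sum_filter]
  refine Finset.sum_congr (Finset.ext fun π ↦ ?_) fun _ _ ↦ rfl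
  simp only [Finset.mem_filter, mem_monicIrreducibles]
  exact ⟨fun ⟨⟨hπ, hirr, hle⟩, hdvd⟩ ↦ ⟨⟨hπ, hirr, hle.trans hmk⟩, hdvd⟩,
    fun ⟨⟨hπ, hirr, _⟩, hdvd⟩ ↦ ⟨⟨hπ, hirr, Nat.le_of_dvd hm hdvd⟩, hdvd⟩⟩

variable {Λ : F[X] → R}

open Classical in
lemma IsMonicMultiplicative.sum_ite_dvd (hΛ : IsMonicMultiplicative Λ) {ρ : F[X]} (hρ : ρ.Monic)
    (k : ℕ) :
    (∑ f ∈ monicOfDegree F k, if ρ ∣ f then Λ f else 0) =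
      if ρ.natDegree ≤ k then Λ ρ * lCoeff Λ (k - ρ.natDegree) else 0 := by
  rw [← Finset.sum_filter]
  split_ifs with hle
  · rw [lCoeff, Finset.mul_sum]
    symm
    refine Finset.sum_bij (fun g _ ↦ ρ * g) (fun g hg ↦ ?_)
      (fun _ _ _ _ h ↦ mul_left_cancel₀ hρ.ne_zero h) (fun f hf ↦ ?_)
      fun g hg ↦ (hΛ.map_mul hρ (mem_monicOfDegree.1 hg).1).symm
    · obtain ⟨hg, hdeg⟩ := mem_monicOfDegree.1 hg
      refine Finset.mem_filter.2 ⟨mem_monicOfDegree.2 ⟨hρ.mul hg, ?_⟩, dvd_mul_right _ _⟩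
      rw [hρ.natDegree_mul hg, hdeg, Nat.add_sub_cancel' hle]
    · obtain ⟨hf, g, rfl⟩ := Finset.mem_filter.1 hf
      obtain ⟨hmonic, hdeg⟩ := mem_monicOfDegree.1 hf
      have hg : g.Monic := hρ.of_mul_monic_left hmonic
      refine ⟨g, mem_monicOfDegree.2 ⟨hg, ?_⟩, rfl⟩
      rw [← hdeg, hρ.natDegree_mul hg, Nat.add_sub_cancel_left]
  · refine Finset.sum_eq_zero fun f hf ↦ absurd ?_ hle
    obtain ⟨hf, hdvd⟩ := Finset.mem_filter.1 hf
    obtain ⟨hmonic, rfl⟩ := mem_monicOfDegree.1 hf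
    exact natDegree_le_of_dvd hdvd hmonic.ne_zero

lemma IsMonicMultiplicative.mul_lCoeff_eq_sum_irreducibles (hΛ : IsMonicMultiplicative Λ) (k : ℕ) :
    k * lCoeff Λ k = ∑ π ∈ monicIrreducibles F k, ∑ j ∈ Finset.Icc 1 k,
      if j * π.natDegree ≤ k then
        π.natDegree * Λ π ^ j * lCoeff Λ (k - j * π.natDegree) else 0 := by
  classical
  calc k * lCoeff Λ k = ∑ f ∈ monicOfDegree F k, ∑ π ∈ monicIrreducibles F k,
        ∑ j ∈ Finset.Icc 1 k, π.natDegree * (if π ^ j ∣ f then Λ f else 0) := by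
        rw [lCoeff, Finset.mul_sum]
        refine Finset.sum_congr rfl fun f hf ↦ ?_
        obtain ⟨hmonic, rfl⟩ := mem_monicOfDegree.1 hf
        conv_lhs => rw [natDegree_eq_sum_pow_dvd hmonic]
        push_cast
        simp only [Finset.sum_mul, ite_mul, zero_mul, mul_ite, mul_zero]
    _ = ∑ π ∈ monicIrreducibles F k, ∑ j ∈ Finset.Icc 1 k,
        π.natDegree * ∑ f ∈ monicOfDegree F k, (if π ^ j ∣ f then Λ f else 0) := by
        rw [Finset.sum_comm]
        refine Finset.sum_congr rfl fun π _ ↦ ?_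
        rw [Finset.sum_comm]
        simp only [Finset.mul_sum]
    _ = _ := by
        refine Finset.sum_congr rfl fun π hπ ↦ Finset.sum_congr rfl fun j _ ↦ ?_
        have hπ := (mem_monicIrreducibles.1 hπ).1
        rw [hΛ.sum_ite_dvd (hπ.pow j), natDegree_pow, hΛ.map_pow hπ, mul_ite, mul_zero, mul_assoc]

theorem IsMonicMultiplicative.mul_lCoeff_eq_sum (hΛ : IsMonicMultiplicative Λ) (k : ℕ) :
    k * lCoeff Λ k = ∑ m ∈ Finset.Icc 1 k, lPowerSum Λ m * lCoeff Λ (k - m) := by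
  rw [hΛ.mul_lCoeff_eq_sum_irreducibles]
  calc _ = ∑ π ∈ monicIrreducibles F k, ∑ m ∈ Finset.Icc 1 k, if π.natDegree ∣ m then
        π.natDegree * Λ π ^ (m / π.natDegree) * lCoeff Λ (k - m) else 0 := by
        refine Finset.sum_congr rfl fun π hπ ↦ ?_
        have hdeg := (mem_monicIrreducibles.1 hπ).2.1.natDegree_pos
        simp only [sum_Icc_ite_dvd hdeg, Nat.mul_div_cancel _ hdeg]
    _ = _ := by
        rw [Finset.sum_comm]
        refine Finset.sum_congr rfl fun m hm ↦ ?_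
        rw [Finset.mem_Icc] at hm
        simp only [lPowerSum_eq_sum_ite Λ hm.1 hm.2, Finset.sum_mul, ite_mul, zero_mul]

lemma lCoeff_zero (hΛ : Λ 1 = 1) : lCoeff Λ 0 = 1 := by
  have hone : monicOfDegree F 0 = {1} := Finset.ext fun f ↦ by
    rw [mem_monicOfDegree, Finset.mem_singleton]
    exact ⟨fun ⟨hf, hdeg⟩ ↦ hf.natDegree_eq_zero.1 hdeg, by rintro rfl; simp⟩
  rw [lCoeff, hone, Finset.sum_singleton, hΛ]

end LFunction

theorem norm_lPowerSum_one_le {F : Type*} [Field F] [Finite F] {Λ : F[X] → ℂ}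
    (hΛ : IsMonicMultiplicative Λ) {r : ℕ} (hr : ∀ k, r < k → lCoeff Λ k = 0) {Q C : ℝ}
    (hQ : 0 < Q) {H : ℕ} (hb : ∀ h, H ≤ h → ‖lPowerSum Λ (2 * h)‖ ≤ C * Q ^ h) :
    ‖lPowerSum Λ 1‖ ≤ r * √Q := by
  obtain ⟨α, hα⟩ := exists_eq_neg_sum_pow_of_newton_identities (lCoeff_zero hΛ.map_one) hr
    hΛ.mul_lCoeff_eq_sum
  exact norm_one_le_of_norm_two_mul_le hα hQ hb

section MixedCharacter

variable {F : Type*} [Field F]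

lemma coeff_zero_prod_X_sub_C {ι : Type*} (s : Finset ι) (r : ι → F) :
    (∏ i ∈ s, (X - C (r i))).coeff 0 = (-1) ^ s.card * ∏ i ∈ s, r i := by
  rw [coeff_zero_eq_eval_zero, eval_prod]
  simp [Finset.prod_neg]

open Classical in
lemma coeff_one_div_coeff_zero_prod_X_sub_C {ι : Type*} (s : Finset ι) (r : ι → F)
    (hr : ∀ i ∈ s, r i ≠ 0) :
    (∏ i ∈ s, (X - C (r i))).coeff 1 / (∏ i ∈ s, (X - C (r i))).coeff 0 = -∑ i ∈ s, (r i)⁻¹ := by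
  induction s using Finset.induction_on with
  | empty => simp [coeff_one]
  | insert i s hi ih =>
    have hrs : ∀ j ∈ s, r j ≠ 0 := fun j hj ↦ hr j (Finset.mem_insert_of_mem hj)
    have hcoeff : (∏ j ∈ s, (X - C (r j))).coeff 0 ≠ 0 := by
      rw [coeff_zero_prod_X_sub_C]
      exact mul_ne_zero (pow_ne_zero _ (neg_ne_zero.2 one_ne_zero)) (Finset.prod_ne_zero_iff.2 hrs)
    have hri := hr i (Finset.mem_insert_self i s)
    rw [Finset.prod_insert hi, Finset.sum_insert hi, mul_coeff_one, mul_coeff_zero, neg_add,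
      ← ih hrs]
    simp only [coeff_sub, coeff_X_zero, coeff_X_one, coeff_C_zero, coeff_C_succ, zero_sub, sub_zero]
    field_simp
    ring

lemma natDegree_X_sq_add_one : (X ^ 2 + 1 : F[X]).natDegree = 2 := by compute_degree!

lemma resultant_X_sq_add_one_prod_X_sub_C {ι : Type*} (s : Finset ι) (r : ι → F) :
    resultant (X ^ 2 + 1) (∏ i ∈ s, (X - C (r i))) 2 = ∏ i ∈ s, (r i ^ 2 + 1) := by
  rw [resultant_prod_right _ _ _ _ natDegree_X_sq_add_one.le (by simp)]
  refine Finset.prod_congr rfl fun i _ ↦ ?_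
  rw [natDegree_X_sub_C, resultant_X_sub_C_right _ _ _ natDegree_X_sq_add_one.le]
  simp

/-- For a monic polynomial `f = ∏ (X - rᵢ)` with nonzero roots this is
`χ (∏ (rᵢ + rᵢ⁻¹)) * ψ (∑ (u * rᵢ + v * rᵢ⁻¹))`, written in terms of the coefficients of `f`: the
Hecke character whose `L`-function governs the mixed character sum attached to `χ`, `ψ`, `u`, `v`.
It vanishes when `f.coeff 0 = 0`, because then `χ` is evaluated at a quotient by zero. -/
noncomputable def mixedCharacter (χ : MulChar F ℂ) (ψ : AddChar F ℂ) (u v : F) (f : F[X]) : ℂ :=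
  χ ((-1) ^ f.natDegree * resultant (X ^ 2 + 1) f 2 / f.coeff 0) *
    ψ (-(u * f.nextCoeff) - v * (f.coeff 1 / f.coeff 0))

variable (χ : MulChar F ℂ) (ψ : AddChar F ℂ) (u v : F)

lemma mixedCharacter_eq_zero {f : F[X]} (hf : f.coeff 0 = 0) : mixedCharacter χ ψ u v f = 0 := by
  rw [mixedCharacter, hf, div_zero, MulChar.map_zero, zero_mul]

lemma isMonicMultiplicative_mixedCharacter : IsMonicMultiplicative (mixedCharacter χ ψ u v) where
  map_one := by simp [mixedCharacter, coeff_one, nextCoeff]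
  map_mul {f g} hf hg := by
    by_cases hf0 : f.coeff 0 = 0
    · rw [mixedCharacter_eq_zero χ ψ u v hf0, zero_mul,
        mixedCharacter_eq_zero χ ψ u v (by rw [mul_coeff_zero, hf0, zero_mul])]
    by_cases hg0 : g.coeff 0 = 0
    · rw [mixedCharacter_eq_zero χ ψ u v hg0, mul_zero,
        mixedCharacter_eq_zero χ ψ u v (by rw [mul_coeff_zero, hg0, mul_zero])]
    simp only [mixedCharacter]
    rw [mul_mul_mul_comm, ← map_mul, ← AddChar.map_add_eq_mul, hf.natDegree_mul hg,
      resultant_mul_right _ _ _ _ natDegree_X_sq_add_one.le, hf.nextCoeff_mul hg, mul_coeff_zero,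
      mul_coeff_one]
    congr 2
    · rw [pow_add]
      field_simp
    · field_simp
      ring

section LCoeff

lemma lCoeff_eq_zero_of_translation [Finite F] {Λ : F[X] → ℂ} {k : ℕ} {g : F[X]} (hg : g.degree < k)
    {ζ : ℂ} (hζ : ζ ≠ 1) (hΛ : ∀ f : F[X], f.Monic → f.natDegree = k → Λ (f + g) = ζ * Λ f) :
    lCoeff Λ k = 0 := by
  have hmaps : ∀ f ∈ monicOfDegree F k, f + g ∈ monicOfDegree F k := by
    intro f hf
    obtain ⟨hmonic, hdeg⟩ := mem_monicOfDegree.1 hf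
    have hlt : g.degree < f.degree := by rwa [degree_eq_natDegree hmonic.ne_zero, hdeg]
    exact mem_monicOfDegree.2 ⟨hmonic.add_of_left hlt,
      by rw [natDegree_add_eq_left_of_degree_lt hlt, hdeg]⟩
  have hinvariant : lCoeff Λ k = ζ * lCoeff Λ k := by
    rw [lCoeff, Finset.mul_sum]
    symm
    refine Finset.sum_bij (fun f _ ↦ f + g) hmaps (fun _ _ _ _ h ↦ add_right_cancel h)
      (fun f hf ↦ ?_) fun f hf ↦ ?_
    · obtain ⟨f', hf', rfl⟩ := Finset.surj_on_of_inj_on_of_card_le (fun f _ ↦ f + g) hmaps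
        (fun _ _ _ _ h ↦ add_right_cancel h) le_rfl f hf
      exact ⟨f', hf', rfl⟩
    · exact (hΛ f (mem_monicOfDegree.1 hf).1 (mem_monicOfDegree.1 hf).2).symm
  by_contra hne
  exact hζ (mul_right_cancel₀ hne (by rw [← hinvariant, one_mul]))

variable {χ ψ u v}

lemma degree_X_sq_add_one_mul_lt (c : F) (l : ℕ) :
    ((X ^ 2 + 1) * (C c * X ^ (l + 2))).degree < ((l + 5 : ℕ) : WithBot ℕ) := by
  have hle : ((X ^ 2 + 1) * (C c * X ^ (l + 2))).degree ≤ ((l + 4 : ℕ) : WithBot ℕ) := by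
    compute_degree
    push_cast
    ring_nf
    rfl
  exact hle.trans_lt (by norm_cast; lia)

lemma mixedCharacter_add {f : F[X]} (hf : f.Monic) {l : ℕ} (hdeg : f.natDegree = l + 5) (c : F) :
    mixedCharacter χ ψ u v (f + (X ^ 2 + 1) * (C c * X ^ (l + 2))) =
      ψ (-(u * c)) * mixedCharacter χ ψ u v f := by
  have hlt : ((X ^ 2 + 1) * (C c * X ^ (l + 2))).degree < f.degree := by
    rw [degree_eq_natDegree hf.ne_zero, hdeg]
    exact degree_X_sq_add_one_mul_lt c l
  have hexpand : (X ^ 2 + 1) * (C c * X ^ (l + 2)) = C c * X ^ (l + 4) + C c * X ^ (l + 2) := by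
    ring
  have hdeg_add : (f + (X ^ 2 + 1) * (C c * X ^ (l + 2))).natDegree = l + 5 := by
    rw [natDegree_add_eq_left_of_degree_lt hlt, hdeg]
  have hresultant : resultant (X ^ 2 + 1) (f + (X ^ 2 + 1) * (C c * X ^ (l + 2))) 2 (l + 5) =
      resultant (X ^ 2 + 1) f 2 (l + 5) := by
    refine resultant_add_mul_right _ _ _ _ _ ?_ natDegree_X_sq_add_one.le
    have := natDegree_C_mul_X_pow_le c (l + 2)
    lia
  have hnext : (f + (X ^ 2 + 1) * (C c * X ^ (l + 2))).nextCoeff = f.nextCoeff + c := by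
    rw [nextCoeff_of_natDegree_pos (by lia), nextCoeff_of_natDegree_pos (by lia), hdeg_add, hdeg,
      hexpand]
    simp [coeff_X_pow]
  have hcoeff {i : ℕ} (hi : i < 2) :
      (f + (X ^ 2 + 1) * (C c * X ^ (l + 2))).coeff i = f.coeff i := by
    rw [hexpand, coeff_add, coeff_add, coeff_C_mul_X_pow, coeff_C_mul_X_pow, if_neg (by lia),
      if_neg (by lia), add_zero, add_zero]
  rw [mixedCharacter, mixedCharacter, hnext, hdeg_add, hdeg, hresultant, hcoeff zero_lt_two,
    hcoeff one_lt_two, mul_left_comm, ← AddChar.map_add_eq_mul]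
  ring_nf

lemma lCoeff_mixedCharacter_eq_zero [Finite F] (hψ : ψ ≠ 1) (hu : u ≠ 0) {k : ℕ} (hk : 4 < k) :
    lCoeff (mixedCharacter χ ψ u v) k = 0 := by
  obtain ⟨x, hx⟩ := AddChar.ne_one_iff.1 hψ
  obtain ⟨l, rfl⟩ := Nat.exists_eq_add_of_le' (show 5 ≤ k from hk)
  refine lCoeff_eq_zero_of_translation (degree_X_sq_add_one_mul_lt (-x / u) l) hx
    fun f hf hdeg ↦ ?_
  rw [mixedCharacter_add hf hdeg, mul_div_cancel₀ _ hu, neg_neg]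

end LCoeff

end MixedCharacter

section ExtensionSum

open UniqueFactorizationMonoid in
lemma eq_pow_of_forall_irreducible_dvd_eq {F : Type*} [Field F] {P π : F[X]} (hP : P.Monic)
    (hπ : 0 < π.natDegree) (hfactor : ∀ ρ : F[X], ρ.Monic → Irreducible ρ → ρ ∣ P → ρ = π) :
    P = π ^ (P.natDegree / π.natDegree) := by
  classical
  have hfac : ∀ ρ ∈ normalizedFactors P, ρ = π := by
    intro ρ hρ
    have hirr := irreducible_of_normalized_factor ρ hρ
    refine hfactor ρ ?_ hirr (dvd_of_mem_normalizedFactors hρ)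
    rw [← normalize_normalized_factor ρ hρ]
    exact monic_normalize hirr.ne_zero
  have hpow : P = π ^ (normalizedFactors P).card := by
    have hprod := prod_normalizedFactors_eq hP.ne_zero
    rw [hP.normalize_eq_self, Multiset.eq_replicate_of_mem hfac, Multiset.prod_replicate] at hprod
    exact hprod.symm
  have hdeg : P.natDegree = (normalizedFactors P).card * π.natDegree := by
    conv_lhs => rw [hpow, natDegree_pow]
  rwa [hdeg, Nat.mul_div_cancel _ hπ]

lemma map_minpoly_pow_eq_prod_X_sub_C {F K : Type*} [Field F] [Field K] [Algebra F K]
    [FiniteDimensional F K] [IsGalois F K] (x : K) :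
    (minpoly F x ^ (Module.finrank F K / (minpoly F x).natDegree)).map (algebraMap F K) =
      ∏ σ : Gal(K/F), (X - C (σ x)) := by
  have hinvariant : Algebra.IsInvariant F K Gal(K/F) :=
    ⟨fun b hb ↦ (IsGalois.mem_range_algebraMap_iff_fixed b).2 hb⟩
  obtain ⟨P, hP⟩ := (mem_lifts _).1 (Algebra.IsInvariant.charpoly_mem_lifts F K Gal(K/F) x)
  simp only [MulSemiringAction.charpoly_eq, AlgEquiv.smul_def] at hP
  have hmonic : P.Monic := by
    rw [← monic_map_iff (f := algebraMap F K), hP]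
    exact monic_prod_X_sub_C _ _
  have hdeg : P.natDegree = Module.finrank F K := by
    rw [← natDegree_map (algebraMap F K), hP, natDegree_finsetProd_X_sub_C_eq_card,
      Finset.card_univ, ← Nat.card_eq_fintype_card, IsGalois.card_aut_eq_finrank]
  rw [← hP, ← hdeg, ← eq_pow_of_forall_irreducible_dvd_eq hmonic
    (minpoly.natDegree_pos (IsIntegral.of_finite F x)) fun ρ hρ hirr hdvd ↦ ?_]
  have hdvd_map := Polynomial.map_dvd (algebraMap F K) hdvd
  have hsplits : (ρ.map (algebraMap F K)).Splits := by
    refine Splits.of_dvd ?_ (hmonic.map _).ne_zero hdvd_map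
    rw [hP]
    exact Splits.prod fun i _ ↦ Splits.X_sub_C _
  obtain ⟨r, hr⟩ := hsplits.exists_eval_eq_zero (by rw [degree_map]; exact hirr.degree_pos.ne')
  have hPr := eval_eq_zero_of_dvd_of_eval_eq_zero hdvd_map hr
  rw [hP, eval_prod, Finset.prod_eq_zero_iff] at hPr
  obtain ⟨σ, -, hσ⟩ := hPr
  rw [eval_sub, eval_X, eval_C, sub_eq_zero] at hσ
  rw [hσ, eval_map_algebraMap, aeval_algHom_apply σ] at hr
  exact minpoly.eq_of_irreducible_of_monic hirr (by simpa using hr) hρ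

lemma mixedCharacter_minpoly_pow {F K : Type*} [Field F] [Field K] [Algebra F K]
    [FiniteDimensional F K] [IsGalois F K] (χ : MulChar F ℂ) (ψ : AddChar F ℂ) (u v : F) (x : K) :
    mixedCharacter χ ψ u v (minpoly F x) ^ (Module.finrank F K / (minpoly F x).natDegree) =
      χ (Algebra.norm F (x + x⁻¹)) *
        ψ (Algebra.trace F K (algebraMap F K u * x + algebraMap F K v * x⁻¹)) := by
  have hmonic := minpoly.monic (IsIntegral.of_finite F x)
  rw [← (isMonicMultiplicative_mixedCharacter χ ψ u v).map_pow hmonic]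
  have hP := map_minpoly_pow_eq_prod_X_sub_C (F := F) x
  set P := minpoly F x ^ (Module.finrank F K / (minpoly F x).natDegree)
  have hinj := (algebraMap F K).injective
  have hcoeff : algebraMap F K (P.coeff 0) = (-1) ^ P.natDegree * ∏ σ : Gal(K/F), σ x := by
    rw [← coeff_map, hP, coeff_zero_prod_X_sub_C, ← natDegree_map (algebraMap F K), hP,
      natDegree_finsetProd_X_sub_C_eq_card]
  by_cases hx : x = 0
  · rw [mixedCharacter_eq_zero _ _ _ _ (hinj (by rw [hcoeff, map_zero]; simp [hx])), hx, inv_zero,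
      add_zero, Algebra.norm_zero, MulChar.map_zero, zero_mul]
  have hσ : ∀ σ : Gal(K/F), σ x ≠ 0 := fun σ ↦ by simpa using hx
  rw [mixedCharacter]
  congr 2
  · apply hinj
    rw [Algebra.norm_eq_prod_automorphisms, map_div₀, map_mul, hcoeff, ← resultant_map_map,
      Polynomial.map_add, Polynomial.map_pow, map_X, Polynomial.map_one,
      ← natDegree_map (algebraMap F K), hP, resultant_X_sq_add_one_prod_X_sub_C, map_pow, map_neg,
      map_one, mul_div_mul_left _ _ (pow_ne_zero _ (neg_ne_zero.2 one_ne_zero)),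
      ← Finset.prod_div_distrib]
    refine Finset.prod_congr rfl fun σ _ ↦ ?_
    rw [map_add, map_inv₀]
    have := hσ σ
    field_simp
  · apply hinj
    rw [trace_eq_sum_automorphisms, map_sub, map_neg, map_mul, map_mul, map_div₀,
      ← nextCoeff_map hinj, ← coeff_map, ← coeff_map, hP,
      coeff_one_div_coeff_zero_prod_X_sub_C _ _ (fun σ _ ↦ hσ σ), prod_X_sub_C_nextCoeff, mul_neg,
      neg_neg, mul_neg, sub_neg_eq_add, Finset.mul_sum, Finset.mul_sum, ← Finset.sum_add_distrib]
    exact Finset.sum_congr rfl fun σ _ ↦ by simp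

variable {F K : Type*} [Field F] [Finite F] [Field K] [Fintype K] [Algebra F K]

open Classical in
lemma card_minpoly_eq {π : F[X]} (hπ : π.Monic) (hirr : Irreducible π)
    (hdvd : π.natDegree ∣ Module.finrank F K) :
    (Finset.univ.filter fun x : K ↦ minpoly F x = π).card = π.natDegree := by
  have hcard : Nat.card F ^ Module.finrank F K = Fintype.card K := by
    rw [← Module.natCard_eq_pow_finrank, Nat.card_eq_fintype_card]
  have hsplits : (π.map (algebraMap F K)).Splits := by
    have hdvd_X := (hirr.natDegree_dvd_iff_dvd_X_pow_card_pow_sub_X).1 hdvd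
    rw [hcard] at hdvd_X
    refine (FiniteField.isSplittingField_sub K F).splits.of_dvd ?_ (Polynomial.map_dvd _ hdvd_X)
    simp only [Polynomial.map_sub, Polynomial.map_pow, map_X]
    exact FiniteField.X_pow_card_sub_X_ne_zero K Fintype.one_lt_card
  rw [← card_rootSet_eq_natDegree (PerfectField.separable_of_irreducible hirr) hsplits,
    ← Set.toFinset_card]
  congr 1
  ext x
  simp only [Finset.mem_filter, Finset.mem_univ, true_and, Set.mem_toFinset, mem_rootSet]
  constructor
  · rintro rfl
    exact ⟨hirr.ne_zero, minpoly.aeval F x⟩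
  · rintro ⟨-, h⟩
    exact (minpoly.eq_of_irreducible_of_monic hirr h hπ).symm

theorem sum_mulChar_norm_mul_addChar_trace_eq_lPowerSum (χ : MulChar F ℂ)
    (ψ : AddChar F ℂ) (u v : F) :
    ∑ x : K, χ (Algebra.norm F (x + x⁻¹)) *
        ψ (Algebra.trace F K (algebraMap F K u * x + algebraMap F K v * x⁻¹)) =
      lPowerSum (mixedCharacter χ ψ u v) (Module.finrank F K) := by
  classical
  have hmaps : ∀ x ∈ (Finset.univ : Finset K), minpoly F x ∈
      (monicIrreducibles F (Module.finrank F K)).filter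
        fun π ↦ π.natDegree ∣ Module.finrank F K := by
    intro x _
    have hx := IsIntegral.of_finite F x
    have hd := minpoly.degree_dvd hx
    exact Finset.mem_filter.2 ⟨mem_monicIrreducibles.2
      ⟨minpoly.monic hx, minpoly.irreducible hx, Nat.le_of_dvd Module.finrank_pos hd⟩, hd⟩
  rw [← Finset.sum_fiberwise_of_maps_to hmaps, lPowerSum]
  refine Finset.sum_congr rfl fun π hπ ↦ ?_
  obtain ⟨hmem, hd⟩ := Finset.mem_filter.1 hπ
  obtain ⟨hmonic, hirr, -⟩ := mem_monicIrreducibles.1 hmem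
  rw [← card_minpoly_eq (K := K) hmonic hirr hd, ← nsmul_eq_mul, ← Finset.sum_const]
  refine Finset.sum_congr rfl fun x hx ↦ ?_
  rw [card_minpoly_eq hmonic hirr hd, ← mixedCharacter_minpoly_pow, (Finset.mem_filter.1 hx).2]

end ExtensionSum

-- Stepanov's bound over the extensions of even degree makes the reciprocal roots of the
-- `L`-polynomial, of degree at most four, of absolute value at most `√(card F)`.
theorem norm_sum_mulChar_mul_addChar_le_of_left_ne_zero {F : Type*} [Field F] [Fintype F]
    (χ : MulChar F ℂ) {ψ : AddChar F ℂ} (hψ : ψ ≠ 1) {u : F} (hu : u ≠ 0) (v : F) :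
    ‖∑ x : F, χ (x + x⁻¹) * ψ (u * x + v * x⁻¹)‖ ≤ 4 * √(Fintype.card F) := by
  obtain ⟨p, hp⟩ := CharP.exists F
  have : Fact p.Prime := ⟨CharP.char_is_prime F p⟩
  have hsum := sum_mulChar_norm_mul_addChar_trace_eq_lPowerSum (K := F) χ ψ u v
  simp only [Algebra.norm_self, Algebra.trace_self, MonoidHom.id_apply, LinearMap.id_apply,
    Algebra.algebraMap_self, RingHom.id_apply, Module.finrank_self] at hsum
  rw [hsum]
  set κ := 2 * Fintype.card F ^ 3 with hκ
  refine mod_cast norm_lPowerSum_one_le (isMonicMultiplicative_mixedCharacter χ ψ u v)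
    (fun k hk ↦ lCoeff_mixedCharacter_eq_zero hψ hu hk) (C := 2 * κ + 4)
    (mod_cast Fintype.card_pos) (H := κ ^ 2 + 3 * κ + 2) fun h hh ↦ ?_
  have : NeZero (2 * h) := ⟨by lia⟩
  let _ : Fintype (FiniteField.Extension F p (2 * h)) := Fintype.ofFinite _
  have hfinrank := FiniteField.finrank_extension F p (2 * h)
  rw [← hfinrank, ← sum_mulChar_norm_mul_addChar_trace_eq_lPowerSum]
  refine norm_sum_mulChar_norm_mul_addChar_trace_le ?_ (by simpa using hu) _ χ hψ hκ.ge ?_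
  · rw [Module.card_eq_pow_finrank (K := F), hfinrank]
  · have := Nat.lt_pow_self (n := h) (Fintype.one_lt_card (α := F))
    lia

/-! ### The character sum bound -/

section WeilBound

variable {F : Type*} [Field F]

lemma mulChar_add_inv (χ : MulChar F ℂ) (x : F) : χ (x + x⁻¹) = χ⁻¹ x * χ (x ^ 2 + 1) := by
  by_cases hx : x = 0
  · rw [hx, inv_zero, add_zero, χ.map_zero, MulChar.map_zero, zero_mul]
  · rw [MulChar.inv_apply', ← map_mul]
    congr 1
    field_simp

lemma exists_mul_self_eq_of_apply_neg_one_eq_one [Finite F] (hF : ringChar F ≠ 2)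
    {χ : MulChar F ℂ} (hχ : χ (-1) = 1) : ∃ ρ : MulChar F ℂ, ρ * ρ = χ := by
  have := Fintype.ofFinite F
  classical
  obtain ⟨g, hg⟩ := IsCyclic.exists_generator (α := Fˣ)
  obtain ⟨w, hw⟩ := IsAlgClosed.exists_pow_nat_eq (χ g) (n := 2) two_pos
  obtain ⟨m, hm⟩ : ∃ m, Fintype.card Fˣ = 2 * m :=
    ⟨Fintype.card F / 2, by
      have := FiniteField.odd_card_of_char_ne_two hF
      have := Fintype.card_eq_card_units_add_one (α := F)
      lia⟩
  have hχg : χ g ^ m = 1 := by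
    have hgm : (g : F) ^ m * (g : F) ^ m = 1 := by
      rw [← pow_add, ← two_mul, ← hm, ← Units.val_pow_eq_pow_val, pow_card_eq_one, Units.val_one]
    rw [← map_pow]
    rcases mul_self_eq_one_iff.1 hgm with h | h
    · rw [h, map_one]
    · rw [h, hχ]
  have hwpow : w ^ Fintype.card Fˣ = 1 := by rw [hm, pow_mul, hw, hχg]
  have hw0 : w ≠ 0 := by
    rintro rfl
    rw [zero_pow Fintype.card_ne_zero] at hwpow
    exact zero_ne_one hwpow
  have hmem : Units.mk0 w hw0 ∈ rootsOfUnity (Fintype.card Fˣ) ℂ := by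
    rw [mem_rootsOfUnity]
    ext
    simpa using hwpow
  refine ⟨MulChar.ofRootOfUnity hmem hg, (MulChar.eq_iff hg _ _).2 ?_⟩
  rw [MulChar.mul_apply, MulChar.ofRootOfUnity_spec, Units.val_mk0, ← sq, hw]

variable [Fintype F]

lemma norm_jacobiSum_le {χ φ : MulChar F ℂ} (h : χ ≠ 1 ∨ φ ≠ 1) :
    ‖jacobiSum χ φ‖ ≤ √(Fintype.card F) := by
  have hQ : 1 ≤ √(Fintype.card F) := Real.one_le_sqrt.2 (mod_cast Fintype.card_pos)
  by_cases hχ : χ = 1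
  · rw [hχ, jacobiSum_one_nontrivial (h.resolve_left (not_not.2 hχ)), norm_neg, norm_one]
    exact hQ
  by_cases hφ : φ = 1
  · rw [hφ, jacobiSum_comm, jacobiSum_one_nontrivial hχ, norm_neg, norm_one]
    exact hQ
  by_cases hχφ : χ * φ = 1
  · rw [← inv_eq_of_mul_eq_one_right hχφ, jacobiSum_nontrivial_inv hχ, norm_neg]
    exact (norm_mulChar_apply_le_one χ _).trans hQ
  have hchar : ringChar ℂ ≠ ringChar F := by
    rw [ringChar.eq_zero]
    exact (CharP.char_ne_zero_of_finite F (ringChar F)).symm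
  have hconj : jacobiSum χ⁻¹ φ⁻¹ = star (jacobiSum χ φ) := by
    simp only [jacobiSum, star_sum, star_mul', MulChar.star_apply']
  have hsq : ‖jacobiSum χ φ‖ ^ 2 = Fintype.card F := by
    have := congrArg norm (jacobiSum_mul_jacobiSum_inv hchar hχ hφ hχφ)
    rwa [hconj, norm_mul, norm_star, ← sq, Complex.norm_natCast] at this
  exact Real.le_sqrt_of_sq_le hsq.le

lemma norm_sum_mulChar_mul_mulChar_add_one_le {χ φ : MulChar F ℂ} (h : χ ≠ 1 ∨ φ ≠ 1) :
    ‖∑ w : F, χ w * φ (w + 1)‖ ≤ √(Fintype.card F) := by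
  have hjacobi : ∑ w : F, χ w * φ (w + 1) = χ (-1) * jacobiSum χ φ := by
    rw [jacobiSum, Finset.mul_sum, ← Equiv.sum_comp (Equiv.neg F)]
    refine Finset.sum_congr rfl fun x _ ↦ ?_
    rw [Equiv.neg_apply, ← mul_assoc, ← map_mul, neg_one_mul, neg_add_eq_sub]
  calc ‖∑ w : F, χ w * φ (w + 1)‖ = ‖χ (-1)‖ * ‖jacobiSum χ φ‖ := by rw [hjacobi, norm_mul]
    _ ≤ 1 * √(Fintype.card F) :=
      mul_le_mul (norm_mulChar_apply_le_one χ _) (norm_jacobiSum_le h) (norm_nonneg _) zero_le_one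
    _ = √(Fintype.card F) := one_mul _

open Classical in
lemma sum_comp_sq (hF : ringChar F ≠ 2) (f : F → ℂ) :
    ∑ x, f (x ^ 2) = ∑ w, f w + ∑ w, (quadraticChar F w : ℂ) * f w := by
  rw [← Finset.sum_add_distrib, ← Finset.sum_fiberwise (g := fun x : F ↦ x ^ 2)]
  refine Finset.sum_congr rfl fun w _ ↦ ?_
  have hsqrts : ((Finset.univ.filter fun x : F ↦ x ^ 2 = w).card : ℂ) = quadraticChar F w + 1 := by
    rw [← Int.cast_one, ← Int.cast_add, ← quadraticChar_card_sqrts hF w, Int.cast_natCast]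
    congr 2
    ext
    simp
  rw [Finset.sum_congr rfl fun x hx ↦ by rw [(Finset.mem_filter.1 hx).2], Finset.sum_const,
    nsmul_eq_mul, hsqrts]
  ring

lemma norm_sum_mulChar_add_inv_le_of_charTwo [CharP F 2] {χ : MulChar F ℂ} (hχ : χ ≠ 1) :
    ‖∑ x : F, χ (x + x⁻¹)‖ ≤ √(Fintype.card F) := by
  have hsum : ∑ x : F, χ (x + x⁻¹) = ∑ w : F, χ⁻¹ w * (χ * χ) (w + 1) := by
    refine Finset.sum_congr rfl fun x _ ↦ ?_
    rw [mulChar_add_inv, MulChar.mul_apply, ← map_mul, ← sq, CharTwo.add_sq, one_pow]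
  rw [hsum]
  exact norm_sum_mulChar_mul_mulChar_add_one_le (Or.inl (inv_ne_one.2 hχ))

lemma norm_sum_mulChar_add_inv_le_of_apply_neg_one_eq_one (hF : ringChar F ≠ 2) {χ : MulChar F ℂ}
    (hχ : χ ≠ 1) (hneg : χ (-1) = 1) : ‖∑ x : F, χ (x + x⁻¹)‖ ≤ 2 * √(Fintype.card F) := by
  classical
  obtain ⟨ρ, hρ⟩ := exists_mul_self_eq_of_apply_neg_one_eq_one hF hneg
  set η : MulChar F ℂ := (quadraticChar F).ringHomComp (Int.castRingHom ℂ) with hη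
  have hsum : ∑ x : F, χ (x + x⁻¹) =
      ∑ w : F, ρ⁻¹ w * χ (w + 1) + ∑ w : F, (η * ρ⁻¹) w * χ (w + 1) := by
    have hterm : ∀ x : F, χ (x + x⁻¹) = ρ⁻¹ (x ^ 2) * χ (x ^ 2 + 1) := fun x ↦ by
      rw [mulChar_add_inv, ← hρ, mul_inv, MulChar.mul_apply, ← map_mul, ← sq]
    simp only [hterm, sum_comp_sq hF fun w ↦ ρ⁻¹ w * χ (w + 1), MulChar.mul_apply, mul_assoc, hη,
      MulChar.ringHomComp_apply, Int.coe_castRingHom]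
  rw [hsum, two_mul]
  exact (norm_add_le _ _).trans (add_le_add
    (norm_sum_mulChar_mul_mulChar_add_one_le (Or.inr hχ))
    (norm_sum_mulChar_mul_mulChar_add_one_le (Or.inr hχ)))

lemma sum_mulChar_add_inv_eq_zero {χ : MulChar F ℂ} (hneg : χ (-1) = -1) :
    ∑ x : F, χ (x + x⁻¹) = 0 := by
  rw [← self_eq_neg, ← Finset.sum_neg_distrib, ← Equiv.sum_comp (Equiv.neg F)]
  refine Finset.sum_congr rfl fun x _ ↦ ?_
  rw [Equiv.neg_apply, inv_neg, ← neg_add, ← neg_one_mul, map_mul, hneg, neg_one_mul]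

lemma norm_sum_mulChar_add_inv_le {χ : MulChar F ℂ} (hχ : χ ≠ 1) :
    ‖∑ x : F, χ (x + x⁻¹)‖ ≤ 4 * √(Fintype.card F) := by
  have hQ := Real.sqrt_nonneg (Fintype.card F)
  by_cases hF : ringChar F = 2
  · have : CharP F 2 := ringChar.of_eq hF
    linarith [norm_sum_mulChar_add_inv_le_of_charTwo hχ]
  have hsq : χ (-1) * χ (-1) = 1 := by rw [← map_mul, neg_one_mul, neg_neg, map_one]
  rcases mul_self_eq_one_iff.1 hsq with hneg | hneg
  · linarith [norm_sum_mulChar_add_inv_le_of_apply_neg_one_eq_one hF hχ hneg]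
  · rw [sum_mulChar_add_inv_eq_zero hneg, norm_zero]
    positivity

theorem norm_sum_mulChar_mul_addChar_le (χ : MulChar F ℂ) {ψ : AddChar F ℂ} (hψ : ψ ≠ 1) {u v : F}
    (h : χ ≠ 1 ∨ u ≠ 0 ∨ v ≠ 0) :
    ‖∑ x : F, χ (x + x⁻¹) * ψ (u * x + v * x⁻¹)‖ ≤ 4 * √(Fintype.card F) := by
  by_cases hu : u = 0
  · by_cases hv : v = 0
    · have hχ : χ ≠ 1 := by tauto
      simpa [hu, hv] using norm_sum_mulChar_add_inv_le hχ
    · have hswap := norm_sum_mulChar_mul_addChar_le_of_left_ne_zero χ hψ hv u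
      rw [← Equiv.sum_comp ((inv_involutive (G := F)).toPerm _)]
      simpa only [Function.Involutive.coe_toPerm, inv_inv, add_comm] using hswap
  · exact norm_sum_mulChar_mul_addChar_le_of_left_ne_zero χ hψ hu v

end WeilBound

/-! ### Elements with prescribed traces -/

section TraceFibre

variable {F E : Type*} [Field F] [Field E] [Algebra F E] {ψ : AddChar F ℂ}

open Classical in
lemma sum_addChar_trace_shift [Fintype F] (hψ : ψ ≠ 1) (a b : F) (x : E) :
    ∑ u : F, ∑ v : F, ψ (-(u * a) - v * b) * ψ (Algebra.trace F E (u • x + v • x⁻¹)) =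
      if Algebra.trace F E x = a ∧ Algebra.trace F E x⁻¹ = b then (Fintype.card F : ℂ) ^ 2
      else 0 := by
  have hprim : ψ.IsPrimitive := AddChar.IsPrimitive.of_ne_one hψ
  have hterm : ∀ u v : F, ψ (-(u * a) - v * b) * ψ (Algebra.trace F E (u • x + v • x⁻¹)) =
      ψ (u * (Algebra.trace F E x - a)) * ψ (v * (Algebra.trace F E x⁻¹ - b)) := by
    intro u v
    rw [← AddChar.map_add_eq_mul, ← AddChar.map_add_eq_mul, LinearMap.map_add,
      LinearMap.map_smul, LinearMap.map_smul, smul_eq_mul, smul_eq_mul]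
    ring_nf
  simp_rw [hterm, ← Finset.mul_sum, ← Finset.sum_mul, AddChar.sum_mulShift _ hprim, sub_eq_zero]
  split_ifs <;> simp_all [sq]

lemma norm_sum_mulChar_mul_addChar_trace_le [Finite F] [Fintype E] (χ : MulChar E ℂ) (hψ : ψ ≠ 1)
    {u v : F} (h : χ ≠ 1 ∨ u ≠ 0 ∨ v ≠ 0) :
    ‖∑ x : E, χ (x + x⁻¹) * ψ (Algebra.trace F E (u • x + v • x⁻¹))‖ ≤ 4 * √(Fintype.card E) := by
  have htrace : ψ.compAddMonoidHom (Algebra.trace F E).toAddMonoidHom ≠ 1 := by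
    obtain ⟨c, hc⟩ := AddChar.ne_one_iff.1 hψ
    obtain ⟨x, hx⟩ := Algebra.trace_surjective F E c
    exact AddChar.ne_one_iff.2 ⟨x, by simpa [hx] using hc⟩
  have huv : χ ≠ 1 ∨ algebraMap F E u ≠ 0 ∨ algebraMap F E v ≠ 0 := by simpa using h
  simpa [Algebra.smul_def] using norm_sum_mulChar_mul_addChar_le χ htrace huv

variable [Fintype E]

variable (F E) in
open Classical in
/-- The elements `ξ` with `Tr ξ = a` and `Tr ξ⁻¹ = b` for which `ξ + ξ⁻¹` is nonzero. For `ξ = 0`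
the convention `0⁻¹ = 0` makes `ξ + ξ⁻¹` vanish, so all elements are units. -/
noncomputable def traceFibre (a b : F) : Finset E :=
  Finset.univ.filter fun ξ ↦ ξ + ξ⁻¹ ≠ 0 ∧ Algebra.trace F E ξ = a ∧ Algebra.trace F E ξ⁻¹ = b

lemma mem_traceFibre {a b : F} {ξ : E} : ξ ∈ traceFibre F E a b ↔
    ξ + ξ⁻¹ ≠ 0 ∧ Algebra.trace F E ξ = a ∧ Algebra.trace F E ξ⁻¹ = b := by
  simp [traceFibre]

lemma card_sq_mul_sum_traceFibre [Fintype F] (hψ : ψ ≠ 1) (a b : F)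
    (χ : MulChar E ℂ) :
    (Fintype.card F : ℂ) ^ 2 * ∑ ξ ∈ traceFibre F E a b, χ (ξ + ξ⁻¹) =
      ∑ w : F × F, ψ (-(w.1 * a) - w.2 * b) *
        ∑ x : E, χ (x + x⁻¹) * ψ (Algebra.trace F E (w.1 • x + w.2 • x⁻¹)) := by
  classical
  simp_rw [Finset.mul_sum]
  rw [Finset.sum_comm, traceFibre, Finset.sum_filter]
  refine Finset.sum_congr rfl fun x _ ↦ ?_
  simp_rw [mul_left_comm _ (χ _)]
  rw [← Finset.mul_sum, Fintype.sum_prod_type, sum_addChar_trace_shift hψ]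
  by_cases hx : x + x⁻¹ = 0
  · simp [hx, MulChar.map_zero]
  · simp [hx, mul_comm]

lemma exists_addChar_ne_one (F : Type*) [Field F] [Finite F] : ∃ ψ : AddChar F ℂ, ψ ≠ 1 := by
  obtain ⟨ψ, hψ⟩ := AddChar.exists_apply_ne_zero.2 (one_ne_zero (α := F))
  exact ⟨ψ, AddChar.ne_one_iff.2 ⟨1, hψ⟩⟩

theorem norm_sum_traceFibre_le [Finite F] (a b : F) {χ : MulChar E ℂ} (hχ : χ ≠ 1) :
    ‖∑ ξ ∈ traceFibre F E a b, χ (ξ + ξ⁻¹)‖ ≤ 4 * √(Fintype.card E) := by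
  cases nonempty_fintype F
  obtain ⟨ψ, hψ⟩ := exists_addChar_ne_one F
  have hq : (0 : ℝ) < (Fintype.card F : ℝ) ^ 2 := by
    have := Fintype.card_pos (α := F)
    positivity
  refine le_of_mul_le_mul_left ?_ hq
  calc (Fintype.card F : ℝ) ^ 2 * ‖∑ ξ ∈ traceFibre F E a b, χ (ξ + ξ⁻¹)‖
      = ‖∑ w : F × F, ψ (-(w.1 * a) - w.2 * b) *
          ∑ x : E, χ (x + x⁻¹) * ψ (Algebra.trace F E (w.1 • x + w.2 • x⁻¹))‖ := by
        rw [← card_sq_mul_sum_traceFibre hψ, norm_mul, norm_pow, Complex.norm_natCast]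
    _ ≤ ∑ _w : F × F, 4 * √(Fintype.card E) := norm_sum_le_of_le _ fun w _ ↦ by
        rw [norm_mul, AddChar.norm_apply, one_mul]
        exact norm_sum_mulChar_mul_addChar_trace_le χ hψ (Or.inl hχ)
    _ = (Fintype.card F : ℝ) ^ 2 * (4 * √(Fintype.card E)) := by
        rw [Finset.sum_const, Finset.card_univ, Fintype.card_prod, nsmul_eq_mul, Nat.cast_mul, sq]

lemma one_mulChar_apply_eq_ite {R : Type*} [Field R] [DecidableEq R] (y : R) :
    (1 : MulChar R ℂ) y = if y = 0 then 0 else 1 := by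
  split_ifs with hy
  · rw [hy, MulChar.map_zero]
  · exact MulChar.one_apply (isUnit_iff_ne_zero.2 hy)

lemma card_sub_three_le_re_sum_one_mulChar :
    (Fintype.card E : ℝ) - 3 ≤ (∑ x : E, (1 : MulChar E ℂ) (x + x⁻¹)).re := by
  classical
  have hcount : ∑ x : E, (1 : MulChar E ℂ) (x + x⁻¹) =
      ((Fintype.card E - (Finset.univ.filter fun x : E ↦ x + x⁻¹ = 0).card : ℝ) : ℂ) := by
    have hterm : ∀ x : E, (1 : MulChar E ℂ) (x + x⁻¹) = 1 - if x + x⁻¹ = 0 then 1 else 0 :=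
      fun x ↦ by rw [one_mulChar_apply_eq_ite]; split_ifs <;> simp
    simp_rw [hterm, Finset.sum_sub_distrib]
    simp
  rw [hcount, Complex.ofReal_re]
  have : ((Finset.univ.filter fun x : E ↦ x + x⁻¹ = 0).card : ℝ) ≤ 3 :=
    mod_cast card_add_inv_eq_zero_le
  linarith

lemma norm_card_sq_mul_card_traceFibre_sub_le [Fintype F] (a b : F) :
    ‖(Fintype.card F : ℂ) ^ 2 * (traceFibre F E a b).card -
        ∑ x : E, (1 : MulChar E ℂ) (x + x⁻¹)‖ ≤
      ((Fintype.card F : ℝ) ^ 2 - 1) * (4 * √(Fintype.card E)) := by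
  classical
  obtain ⟨ψ, hψ⟩ := exists_addChar_ne_one F
  have hcard : ∑ ξ ∈ traceFibre F E a b, (1 : MulChar E ℂ) (ξ + ξ⁻¹) =
      (traceFibre F E a b).card := by
    rw [Finset.sum_congr rfl fun ξ hξ ↦
      MulChar.one_apply (isUnit_iff_ne_zero.2 (mem_traceFibre.1 hξ).1), Finset.sum_const,
      nsmul_eq_mul, mul_one]
  rw [← hcard, card_sq_mul_sum_traceFibre hψ, ← Finset.add_sum_erase _ _ (Finset.mem_univ 0)]
  simp only [Prod.fst_zero, Prod.snd_zero, zero_mul, neg_zero, sub_zero, zero_smul, add_zero,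
    map_zero, AddChar.map_zero_eq_one, one_mul, mul_one, add_sub_cancel_left]
  calc _ ≤ ∑ _w ∈ Finset.univ.erase (0 : F × F), 4 * √(Fintype.card E) :=
        norm_sum_le_of_le _ fun w hw ↦ by
          rw [norm_mul, AddChar.norm_apply, one_mul]
          refine norm_sum_mulChar_mul_addChar_trace_le 1 hψ (Or.inr ?_)
          simpa [Prod.ext_iff, imp_iff_not_or] using hw
    _ = ((Fintype.card F : ℝ) ^ 2 - 1) * (4 * √(Fintype.card E)) := by
        rw [Finset.sum_const, Finset.card_erase_of_mem (Finset.mem_univ _), Finset.card_univ,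
          Fintype.card_prod, nsmul_eq_mul,
          Nat.cast_pred (Nat.mul_pos Fintype.card_pos Fintype.card_pos), Nat.cast_mul, sq]

theorem le_card_traceFibre [Fintype F] (a b : F) :
    (Fintype.card E : ℝ) / (Fintype.card F : ℝ) ^ 2 - 4 * √(Fintype.card E) ≤
      (traceFibre F E a b).card := by
  have hq : (0 : ℝ) < (Fintype.card F : ℝ) ^ 2 := by
    have := Fintype.card_pos (α := F)
    positivity
  have hQ : 1 ≤ √(Fintype.card E) := Real.one_le_sqrt.2 (mod_cast Fintype.card_pos)
  have hre : ((Fintype.card F : ℂ) ^ 2 * (traceFibre F E a b).card).re =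
      (Fintype.card F : ℝ) ^ 2 * (traceFibre F E a b).card := by
    norm_cast
  have herror := (abs_le.1 ((Complex.abs_re_le_norm _).trans
    (norm_card_sq_mul_card_traceFibre_sub_le (E := E) a b))).1
  rw [Complex.sub_re, hre] at herror
  rw [sub_le_iff_le_add, div_le_iff₀ hq]
  linarith [card_sub_three_le_re_sum_one_mulChar (E := E)]

end TraceFibre

/-! ### The modified prime sieve -/

section WeightedSieve

variable {ι α : Type*} (I : ι → α → ℝ) (t : ι → ℝ)

/-- The relative deviation of a condition with indicator `I r` from its expected density `t r`. -/
noncomputable def relativeDeviation (r : ι) (x : α) : ℝ := I r x / t r - 1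

/-- The weight of Cohen's modified prime sieve, with core conditions `K`, sieving conditions `P` and
large conditions `L`: for indicators `I` it is positive only where all the conditions hold. -/
noncomputable def sieveWeight (K P L : Finset ι) (x : α) : ℝ :=
  (∏ r ∈ K, I r x) * (∑ p ∈ P, I p x - (P.card - 1)) - ∑ l ∈ L, (1 - I l x)

variable {I t} {X : Finset α} {K P L : Finset ι} {H : ℝ}

lemma eq_density_mul_one_add_relativeDeviation {r : ι} (hr : 0 < t r) (x : α) :
    I r x = t r * (1 + relativeDeviation I t r x) := by
  rw [relativeDeviation, add_sub_cancel, mul_div_cancel₀ _ hr.ne']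

lemma prod_eq_density_mul_sum_powerset (ht : ∀ r ∈ K, 0 < t r) (x : α) :
    ∏ r ∈ K, I r x =
      (∏ r ∈ K, t r) * ∑ B ∈ K.powerset, ∏ r ∈ B, relativeDeviation I t r x := by
  rw [Finset.prod_congr rfl fun r hr ↦ eq_density_mul_one_add_relativeDeviation (ht r hr) x,
    Finset.prod_mul_distrib, Finset.prod_one_add]

lemma abs_sum_prod_sub_le (ht : ∀ r ∈ K, 0 < t r)
    (hH : ∀ B ⊆ K, B.Nonempty → |∑ x ∈ X, ∏ r ∈ B, relativeDeviation I t r x| ≤ H) :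
    |∑ x ∈ X, ∏ r ∈ K, I r x - (∏ r ∈ K, t r) * X.card| ≤
      (∏ r ∈ K, t r) * ((2 ^ K.card - 1) * H) := by
  classical
  have hexpand : ∑ x ∈ X, ∏ r ∈ K, I r x - (∏ r ∈ K, t r) * X.card =
      (∏ r ∈ K, t r) *
        ∑ B ∈ K.powerset.erase ∅, ∑ x ∈ X, ∏ r ∈ B, relativeDeviation I t r x := by
    simp_rw [prod_eq_density_mul_sum_powerset ht]
    rw [← Finset.mul_sum, Finset.sum_comm,
      ← Finset.add_sum_erase _ _ (Finset.empty_mem_powerset K), ← mul_sub]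
    simp
  have hcard : ((K.powerset.erase ∅).card : ℝ) = 2 ^ K.card - 1 := by
    rw [Finset.card_erase_of_mem (Finset.empty_mem_powerset K), Finset.card_powerset,
      Nat.cast_pred (by positivity), Nat.cast_pow, Nat.cast_two]
  have hθ : 0 ≤ ∏ r ∈ K, t r := Finset.prod_nonneg fun r hr ↦ (ht r hr).le
  rw [hexpand, abs_mul, abs_of_nonneg hθ, ← hcard, ← nsmul_eq_mul, ← Finset.sum_const]
  refine mul_le_mul_of_nonneg_left ((Finset.abs_sum_le_sum_abs _ _).trans ?_) hθ
  refine Finset.sum_le_sum fun B hB ↦ ?_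
  rw [Finset.mem_erase, Finset.mem_powerset] at hB
  exact hH B hB.2 (Finset.nonempty_iff_ne_empty.2 hB.1)

lemma abs_sum_sub_le {l : ι} (hl : 0 < t l) (hH : |∑ x ∈ X, relativeDeviation I t l x| ≤ H) :
    |∑ x ∈ X, I l x - t l * X.card| ≤ t l * H := by
  have h := abs_sum_prod_sub_le (I := I) (t := t) (X := X) (K := {l}) (H := H) (by simpa using hl)
    fun B hB hne ↦ by simpa [hne.subset_singleton_iff.1 hB] using hH
  norm_num at h
  exact h

lemma sum_sieveWeight (I : ι → α → ℝ) (X : Finset α) (K P L : Finset ι) :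
    ∑ x ∈ X, sieveWeight I K P L x =
      ∑ p ∈ P, ∑ x ∈ X, (∏ r ∈ K, I r x) * I p x - (P.card - 1) * ∑ x ∈ X, ∏ r ∈ K, I r x -
        ∑ l ∈ L, (X.card - ∑ x ∈ X, I l x) := by
  have hlarge : ∀ l, (X.card : ℝ) - ∑ x ∈ X, I l x = ∑ x ∈ X, (1 - I l x) := by simp
  simp_rw [hlarge, sieveWeight]
  rw [Finset.sum_comm, Finset.sum_comm (s := L), Finset.mul_sum, ← Finset.sum_sub_distrib,
    ← Finset.sum_sub_distrib]
  refine Finset.sum_congr rfl fun x _ ↦ ?_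
  rw [← Finset.mul_sum]
  ring

variable [DecidableEq ι]

lemma abs_sum_prod_mul_sub_le (ht : ∀ r ∈ K, 0 < t r) {p : ι} (hp : 0 < t p) (hpK : p ∉ K)
    (hH : ∀ B ⊆ K, |∑ x ∈ X, ∏ r ∈ insert p B, relativeDeviation I t r x| ≤ H) :
    |∑ x ∈ X, (∏ r ∈ K, I r x) * I p x - t p * ∑ x ∈ X, ∏ r ∈ K, I r x| ≤
      t p * ((∏ r ∈ K, t r) * (2 ^ K.card * H)) := by
  have hexpand : ∑ x ∈ X, (∏ r ∈ K, I r x) * I p x - t p * ∑ x ∈ X, ∏ r ∈ K, I r x =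
      t p * ((∏ r ∈ K, t r) *
        ∑ B ∈ K.powerset, ∑ x ∈ X, ∏ r ∈ insert p B, relativeDeviation I t r x) := by
    rw [Finset.sum_comm, Finset.mul_sum, Finset.mul_sum, Finset.mul_sum, ← Finset.sum_sub_distrib]
    refine Finset.sum_congr rfl fun x _ ↦ ?_
    have hinsert : ∀ B ∈ K.powerset, ∏ r ∈ insert p B, relativeDeviation I t r x =
        relativeDeviation I t p x * ∏ r ∈ B, relativeDeviation I t r x := fun B hB ↦
      Finset.prod_insert fun h ↦ hpK (Finset.mem_powerset.1 hB h)
    rw [Finset.sum_congr rfl hinsert, ← Finset.mul_sum, prod_eq_density_mul_sum_powerset ht,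
      eq_density_mul_one_add_relativeDeviation (I := I) hp]
    ring
  have hθ : 0 ≤ ∏ r ∈ K, t r := Finset.prod_nonneg fun r hr ↦ (ht r hr).le
  rw [hexpand, abs_mul, abs_mul, abs_of_pos hp, abs_of_nonneg hθ]
  have hsum : |∑ B ∈ K.powerset, ∑ x ∈ X, ∏ r ∈ insert p B, relativeDeviation I t r x| ≤
      2 ^ K.card * H := by
    refine (Finset.abs_sum_le_sum_abs _ _).trans
      ((Finset.sum_le_sum fun B hB ↦ hH B (Finset.mem_powerset.1 hB)).trans_eq ?_)
    rw [Finset.sum_const, Finset.card_powerset, nsmul_eq_mul, Nat.cast_pow, Nat.cast_two]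
  gcongr

lemma le_sum_sieveWeight {θ δ ε : ℝ} (hKP : Disjoint K P) (ht : ∀ r ∈ K ∪ P ∪ L, 0 < t r)
    (hH : ∀ B ⊆ K ∪ P ∪ L, B.Nonempty → |∑ x ∈ X, ∏ r ∈ B, relativeDeviation I t r x| ≤ H)
    (hθ : θ = ∏ r ∈ K, t r) (hδ : δ = 1 - ∑ p ∈ P, (1 - t p)) (hδ0 : 0 ≤ δ)
    (hε : ε = ∑ l ∈ L, (1 - t l)) :
    (θ * δ - ε) * X.card + H * θ * δ -
        H * (θ * (P.card - 1 + 2 * δ) * 2 ^ K.card + (L.card - ε)) ≤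
      ∑ x ∈ X, sieveWeight I K P L x := by
  have hK : K ⊆ K ∪ P ∪ L := Finset.subset_union_left.trans Finset.subset_union_left
  have hP : P ⊆ K ∪ P ∪ L := Finset.subset_union_right.trans Finset.subset_union_left
  have hL : L ⊆ K ∪ P ∪ L := Finset.subset_union_right
  have hKt : ∀ r ∈ K, 0 < t r := fun r hr ↦ ht r (hK hr)
  have hcore : θ * X.card - θ * ((2 ^ K.card - 1) * H) ≤ ∑ x ∈ X, ∏ r ∈ K, I r x := by
    have := (abs_le.1 (abs_sum_prod_sub_le hKt fun B hB ↦ hH B (hB.trans hK))).1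
    rw [← hθ] at this
    linarith
  have hsieving : (P.card - 1 + δ) * (∑ x ∈ X, ∏ r ∈ K, I r x - θ * (2 ^ K.card * H)) ≤
      ∑ p ∈ P, ∑ x ∈ X, (∏ r ∈ K, I r x) * I p x := by
    have hδ' : (P.card : ℝ) - 1 + δ = ∑ p ∈ P, t p := by simp [hδ]
    rw [hδ', Finset.sum_mul]
    refine Finset.sum_le_sum fun p hp ↦ ?_
    have := (abs_le.1 (abs_sum_prod_mul_sub_le (I := I) (X := X) hKt (ht p (hP hp))
      (Finset.disjoint_right.1 hKP hp) fun B hB ↦ hH _ (Finset.insert_subset (hP hp)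
        (hB.trans hK)) (Finset.insert_nonempty _ _))).1
    rw [← hθ] at this
    linarith
  have hlarge : ∑ l ∈ L, (X.card - ∑ x ∈ X, I l x) ≤ ε * X.card + (L.card - ε) * H := by
    have hε' : (L.card : ℝ) - ε = ∑ l ∈ L, t l := by simp [hε]
    rw [hε', hε, Finset.sum_mul, Finset.sum_mul, ← Finset.sum_add_distrib]
    refine Finset.sum_le_sum fun l hl ↦ ?_
    have := (abs_le.1 (abs_sum_sub_le (I := I) (X := X) (ht l (hL hl)) (by
      simpa using hH {l} (Finset.singleton_subset_iff.2 (hL hl)) (by simp)))).1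
    linarith
  rw [sum_sieveWeight]
  linarith [mul_le_mul_of_nonneg_left hcore hδ0]

lemma eq_one_of_sieveWeight_pos {x : α} (hI : ∀ r, I r x = 0 ∨ I r x = 1)
    (hx : 0 < sieveWeight I K P L x) {r : ι} (hr : r ∈ K ∪ P ∪ L) : I r x = 1 := by
  have hle : ∀ r, I r x ≤ 1 := fun r ↦ (hI r).elim (fun h ↦ by simp [h]) fun h ↦ h.le
  have hge : ∀ r, 0 ≤ I r x := fun r ↦ (hI r).elim (fun h ↦ h.ge) fun h ↦ by simp [h]
  have hcore_le : ∏ r ∈ K, I r x ≤ 1 := Finset.prod_le_one (fun r _ ↦ hge r) fun r _ ↦ hle r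
  have hcore_nonneg : 0 ≤ ∏ r ∈ K, I r x := Finset.prod_nonneg fun r _ ↦ hge r
  have hlarge_nonneg : 0 ≤ ∑ l ∈ L, (1 - I l x) :=
    Finset.sum_nonneg fun l _ ↦ sub_nonneg.2 (hle l)
  have hsieving_le : ∑ p ∈ P, I p x - (P.card - 1) ≤ 1 := by
    have : ∑ p ∈ P, I p x ≤ P.card := by simpa using Finset.sum_le_card_nsmul P _ 1 fun p _ ↦ hle p
    linarith
  refine (hI r).resolve_left fun h0 ↦ hx.not_ge ?_
  rw [sieveWeight, sub_nonpos]
  rw [Finset.mem_union, Finset.mem_union] at hr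
  obtain (hrK | hrP) | hrL := hr
  · rwa [Finset.prod_eq_zero (f := fun r ↦ I r x) hrK h0, zero_mul]
  · have hle_erase : ∑ p ∈ P.erase r, I p x ≤ P.card - 1 := by
      simpa [Finset.cast_card_erase_of_mem hrP] using
        Finset.sum_le_card_nsmul (P.erase r) _ 1 fun p _ ↦ hle p
    rw [← Finset.add_sum_erase _ _ hrP, h0, zero_add]
    exact (mul_nonpos_of_nonneg_of_nonpos hcore_nonneg (sub_nonpos.2 hle_erase)).trans
      hlarge_nonneg
  · have hone_le : 1 ≤ ∑ l ∈ L, (1 - I l x) := by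
      simpa [h0] using Finset.single_le_sum (f := fun l ↦ 1 - I l x)
        (fun l _ ↦ sub_nonneg.2 (hle l)) hrL
    exact ((mul_le_of_le_one_right hcore_nonneg hsieving_le).trans hcore_le).trans hone_le

end WeightedSieve

section PrimitiveSieve

lemma not_dvd_orderOf_mul {G : Type*} [CommMonoid G] {r : ℕ} (hr : r.Prime) {g h : G}
    (hg : ¬ r ∣ orderOf g) (hh : ¬ r ∣ orderOf h) : ¬ r ∣ orderOf (g * h) := fun hdvd ↦
  (hr.dvd_mul.1 ((hdvd.trans ((Commute.all g h).orderOf_mul_dvd_lcm)).trans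
    (Nat.lcm_dvd_mul _ _))).elim hg hh

lemma orderOf_pow_of_mem_Ico {G : Type*} [Monoid G] {g : G} (hg : (orderOf g).Prime) {j : ℕ}
    (hj : j ∈ Finset.Ico 1 (orderOf g)) : orderOf (g ^ j) = orderOf g :=
  have hj := Finset.mem_Ico.1 hj
  Nat.Coprime.orderOf_pow (Nat.coprime_of_lt_prime (Nat.pos_iff_ne_zero.1 hj.1) hj.2 hg)

variable {E : Type*} [Field E]

/-- The mean over `0 < j < orderOf χ` of the values `(χ ^ j) y`. If `χ` has prime order `r` and
`y ≠ 0`, its negative is the relative deviation of the condition `χ y ≠ 1` from its expected density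
`1 - 1 / r`. -/
noncomputable def nontrivialPowerMean (χ : MulChar E ℂ) (y : E) : ℂ :=
  (∑ j ∈ Finset.Ico 1 (orderOf χ), (χ ^ j) y) / (orderOf χ - 1)

lemma sum_Ico_pow_apply_eq (χ : MulChar E ℂ) (hχ : 0 < orderOf χ) {y : E} (hy : y ≠ 0) :
    ∑ j ∈ Finset.Ico 1 (orderOf χ), (χ ^ j) y = if χ y = 1 then (orderOf χ : ℂ) - 1 else -1 := by
  have hpow : ∀ j, (χ ^ j) y = χ y ^ j := fun j ↦ by
    simpa using MulChar.pow_apply_coe χ j (Units.mk0 y hy)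
  have hrange : ∑ j ∈ Finset.Ico 1 (orderOf χ), (χ ^ j) y =
      ∑ j ∈ Finset.range (orderOf χ), χ y ^ j - 1 := by
    simp_rw [hpow, Finset.range_eq_Ico, Finset.sum_eq_sum_Ico_succ_bot hχ, pow_zero, zero_add,
      add_sub_cancel_left]
  rw [hrange]
  split_ifs with h
  · simp [h]
  · rw [geom_sum_eq h, ← hpow, pow_orderOf_eq_one, MulChar.one_apply (isUnit_iff_ne_zero.2 hy),
      sub_self, zero_div, zero_sub]

open Classical in
/-- The indicator of the condition `c r (f x) ≠ 1`. When `c r` has prime order `r`, this condition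
forces `f x` not to be an `r`-th power. -/
noncomputable def nontrivialValueIndicator {α : Type*} (c : ℕ → MulChar E ℂ) (f : α → E) (r : ℕ)
    (x : α) : ℝ :=
  if c r (f x) = 1 then 0 else 1

lemma relativeDeviation_eq_neg_nontrivialPowerMean {α : Type*} {f : α → E} {c : ℕ → MulChar E ℂ}
    {r : ℕ} (hr : r.Prime) (hc : orderOf (c r) = r) {x : α} (hx : f x ≠ 0) :
    (relativeDeviation (nontrivialValueIndicator c f) (fun r : ℕ ↦ 1 - 1 / (r : ℝ)) r x : ℂ) =
      -nontrivialPowerMean (c r) (f x) := by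
  have hr0 : (r : ℂ) ≠ 0 := mod_cast hr.ne_zero
  have hr1 : (r : ℂ) - 1 ≠ 0 := sub_ne_zero.2 (mod_cast hr.one_lt.ne')
  rw [relativeDeviation, nontrivialValueIndicator, nontrivialPowerMean,
    sum_Ico_pow_apply_eq _ (hr.pos.trans_eq hc.symm) hx, hc]
  split_ifs with h
  · simp [hr1]
  · push_cast
    field_simp
    ring

lemma norm_sum_mul_nontrivialPowerMean_mul_le {α : Type*} {X : Finset α} {f : α → E} {g : α → ℂ}
    {ρ χ : MulChar E ℂ} {H : ℝ} (hχ : 1 < orderOf χ)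
    (hH : ∀ j ∈ Finset.Ico 1 (orderOf χ), ‖∑ x ∈ X, (ρ * χ ^ j) (f x) * g x‖ ≤ H) :
    ‖∑ x ∈ X, ρ (f x) * (nontrivialPowerMean χ (f x) * g x)‖ ≤ H := by
  have hmean : ∑ x ∈ X, ρ (f x) * (nontrivialPowerMean χ (f x) * g x) =
      (∑ j ∈ Finset.Ico 1 (orderOf χ), ∑ x ∈ X, (ρ * χ ^ j) (f x) * g x) / (orderOf χ - 1) := by
    rw [Finset.sum_comm, Finset.sum_div]
    refine Finset.sum_congr rfl fun x _ ↦ ?_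
    simp_rw [nontrivialPowerMean, MulChar.mul_apply, ← Finset.sum_mul, ← Finset.mul_sum]
    ring
  have hpos : (0 : ℝ) < orderOf χ - 1 := sub_pos.2 (mod_cast hχ)
  have hnorm : ‖(orderOf χ : ℂ) - 1‖ = orderOf χ - 1 := by
    rw [← Nat.cast_one, ← Nat.cast_sub hχ.le, Complex.norm_natCast, Nat.cast_sub hχ.le,
      Nat.cast_one]
  rw [hmean, norm_div, hnorm, div_le_iff₀ hpos]
  refine (norm_sum_le_of_le _ hH).trans_eq ?_
  rw [Finset.sum_const, Nat.card_Ico, nsmul_eq_mul, Nat.cast_sub hχ.le, Nat.cast_one, mul_comm]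

lemma norm_sum_mul_prod_nontrivialPowerMean_le {α : Type*} {X : Finset α} {f : α → E} {H : ℝ}
    (hH : ∀ χ : MulChar E ℂ, χ ≠ 1 → ‖∑ x ∈ X, χ (f x)‖ ≤ H) {c : ℕ → MulChar E ℂ}
    {B : Finset ℕ} (hB : ∀ r ∈ B, r.Prime) (hc : ∀ r ∈ B, orderOf (c r) = r)
    (ρ : MulChar E ℂ) (hρ : ∀ r ∈ B, ¬ r ∣ orderOf ρ) (hρB : ρ ≠ 1 ∨ B.Nonempty) :
    ‖∑ x ∈ X, ρ (f x) * ∏ r ∈ B, nontrivialPowerMean (c r) (f x)‖ ≤ H := by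
  induction B using Finset.cons_induction generalizing ρ with
  | empty => simpa using hH ρ (by simpa using hρB)
  | cons s B hs ih =>
    rw [Finset.forall_mem_cons] at hB hc hρ
    obtain ⟨hs_prime, hB⟩ := hB
    obtain ⟨hs_order, hc⟩ := hc
    obtain ⟨hs_ρ, hρ⟩ := hρ
    simp_rw [Finset.prod_cons]
    refine norm_sum_mul_nontrivialPowerMean_mul_le (hs_order.symm ▸ hs_prime.one_lt) fun j hj ↦ ?_
    have hj_order : orderOf (c s ^ j) = s :=
      (orderOf_pow_of_mem_Ico (hs_order.symm ▸ hs_prime) hj).trans hs_order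
    refine ih hB hc (ρ * c s ^ j) (fun r hr ↦ ?_) (Or.inl fun h ↦ hs_ρ ?_)
    · refine not_dvd_orderOf_mul (hB r hr) (hρ r hr) fun hdvd ↦ hs ?_
      rw [hj_order, Nat.prime_dvd_prime_iff_eq (hB r hr) hs_prime] at hdvd
      exact hdvd ▸ hr
    · rw [eq_inv_of_mul_eq_one_left h, orderOf_inv, hj_order]

lemma abs_sum_prod_relativeDeviation_le {α : Type*} {X : Finset α} {f : α → E} {H : ℝ}
    (hf : ∀ x ∈ X, f x ≠ 0) (hH : ∀ χ : MulChar E ℂ, χ ≠ 1 → ‖∑ x ∈ X, χ (f x)‖ ≤ H)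
    {c : ℕ → MulChar E ℂ} {B : Finset ℕ} (hB : ∀ r ∈ B, r.Prime)
    (hc : ∀ r ∈ B, orderOf (c r) = r) (hne : B.Nonempty) :
    |∑ x ∈ X, ∏ r ∈ B, relativeDeviation (nontrivialValueIndicator c f)
      (fun r : ℕ ↦ 1 - 1 / (r : ℝ)) r x| ≤ H := by
  have hsum : ((∑ x ∈ X, ∏ r ∈ B, relativeDeviation (nontrivialValueIndicator c f)
      (fun r : ℕ ↦ 1 - 1 / (r : ℝ)) r x : ℝ) : ℂ) =
      (-1) ^ B.card *
        ∑ x ∈ X, (1 : MulChar E ℂ) (f x) * ∏ r ∈ B, nontrivialPowerMean (c r) (f x) := by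
    rw [Complex.ofReal_sum, Finset.mul_sum]
    refine Finset.sum_congr rfl fun x hx ↦ ?_
    rw [Complex.ofReal_prod, Finset.prod_congr rfl fun r hr ↦
      relativeDeviation_eq_neg_nontrivialPowerMean (hB r hr) (hc r hr) (hf x hx), Finset.prod_neg,
      MulChar.one_apply (isUnit_iff_ne_zero.2 (hf x hx)), one_mul]
  rw [← Real.norm_eq_abs, ← Complex.norm_real, hsum, norm_mul, norm_pow, norm_neg, norm_one,
    one_pow, one_mul]
  exact norm_sum_mul_prod_nontrivialPowerMean_le hH hB hc 1
    (fun r hr ↦ by simpa using (hB r hr).ne_one) (Or.inr hne)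

variable [Fintype E]

lemma exists_forall_orderOf_mulChar_eq :
    ∃ c : ℕ → MulChar E ℂ, ∀ r ∈ (Fintype.card E - 1).primeFactors, orderOf (c r) = r := by
  have hex : ∀ r : ℕ, ∃ χ : MulChar E ℂ, r ∈ (Fintype.card E - 1).primeFactors → orderOf χ = r := by
    intro r
    by_cases hr : r ∈ (Fintype.card E - 1).primeFactors
    · obtain ⟨χ, hχ⟩ := MulChar.exists_mulChar_orderOf E (Nat.dvd_of_mem_primeFactors hr)
        (Complex.isPrimitiveRoot_exp r (Nat.prime_of_mem_primeFactors hr).ne_zero)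
      exact ⟨χ, fun _ ↦ hχ⟩
    · exact ⟨1, fun h ↦ absurd h hr⟩
  choose c hc using hex
  exact ⟨c, hc⟩

lemma exists_pow_eq_of_pow_div_eq_one {y : Eˣ} {r : ℕ} (hr : r ∣ Fintype.card E - 1)
    (hy : y ^ ((Fintype.card E - 1) / r) = 1) : ∃ z : Eˣ, z ^ r = y := by
  have hcard : Nat.card Eˣ = Fintype.card E - 1 := by
    rw [Nat.card_units, Nat.card_eq_fintype_card]
  obtain ⟨g, hg⟩ := IsCyclic.exists_generator (α := Eˣ)
  obtain ⟨i, rfl⟩ := mem_powers_iff_mem_zpowers.2 (hg y)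
  obtain ⟨m, hm⟩ := hr
  have hpos : 0 < r * m := hm ▸ hcard ▸ Nat.card_pos
  have hdvd : r * m ∣ i * m := by
    rw [← hm, ← hcard, ← orderOf_eq_card_of_forall_mem_zpowers hg]
    refine orderOf_dvd_of_pow_eq_one ?_
    rwa [hm, Nat.mul_div_cancel_left _ (Nat.pos_of_mul_pos_right hpos), ← pow_mul] at hy
  obtain ⟨e, rfl⟩ := Nat.dvd_of_mul_dvd_mul_right (Nat.pos_of_mul_pos_left hpos) hdvd
  exact ⟨g ^ e, by rw [← pow_mul, mul_comm]⟩

lemma orderOf_eq_card_sub_one_of_mulChar_ne_one {c : ℕ → MulChar E ℂ}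
    (hc : ∀ r ∈ (Fintype.card E - 1).primeFactors, orderOf (c r) = r) {y : E} (hy : y ≠ 0)
    (h : ∀ r ∈ (Fintype.card E - 1).primeFactors, c r y ≠ 1) :
    orderOf y = Fintype.card E - 1 := by
  have hcard : 0 < Fintype.card E - 1 := Nat.sub_pos_of_lt Fintype.one_lt_card
  refine orderOf_eq_of_pow_and_pow_div_prime hcard (FiniteField.pow_card_sub_one_eq_one y hy)
    fun r hr hdvd hpow ↦ ?_
  have hr_mem : r ∈ (Fintype.card E - 1).primeFactors :=
    Nat.mem_primeFactors.2 ⟨hr, hdvd, hcard.ne'⟩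
  obtain ⟨z, hz⟩ := exists_pow_eq_of_pow_div_eq_one (y := Units.mk0 y hy) hdvd (by ext; simpa)
  have hpow_one : c r ^ r = 1 := orderOf_dvd_iff_pow_eq_one.1 (hc r hr_mem).dvd
  refine h r hr_mem ?_
  rw [← Units.val_mk0 hy, ← hz, Units.val_pow_eq_pow_val, map_pow, ← MulChar.pow_apply_coe,
    hpow_one, MulChar.one_apply_coe]

theorem exists_orderOf_eq_card_sub_one_of_sieve {α : Type*} {X : Finset α} {f : α → E} {H : ℝ}
    (hf : ∀ x ∈ X, f x ≠ 0) (hH : ∀ χ : MulChar E ℂ, χ ≠ 1 → ‖∑ x ∈ X, χ (f x)‖ ≤ H)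
    {K P L : Finset ℕ} (hKPL : (Fintype.card E - 1).primeFactors = K ∪ P ∪ L)
    (hKP : Disjoint K P) {θ δ ε : ℝ} (hθ : θ = ∏ r ∈ K, (1 - 1 / (r : ℝ)))
    (hδ : δ = 1 - ∑ p ∈ P, 1 / (p : ℝ)) (hδ0 : 0 ≤ δ) (hε : ε = ∑ l ∈ L, 1 / (l : ℝ))
    (hpos : 0 < (θ * δ - ε) * X.card + H * θ * δ -
      H * (θ * (P.card - 1 + 2 * δ) * 2 ^ K.card + (L.card - ε))) :
    ∃ x ∈ X, orderOf (f x) = Fintype.card E - 1 := by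
  obtain ⟨c, hc⟩ := exists_forall_orderOf_mulChar_eq (E := E)
  have hprime : ∀ r ∈ K ∪ P ∪ L, r.Prime := fun r hr ↦ Nat.prime_of_mem_primeFactors (hKPL ▸ hr)
  have hdensity : ∀ r ∈ K ∪ P ∪ L, 0 < 1 - 1 / (r : ℝ) := fun r hr ↦
    sub_pos.2 ((div_lt_one (mod_cast (hprime r hr).pos)).2 (mod_cast (hprime r hr).one_lt))
  have hweight : 0 < ∑ x ∈ X, sieveWeight (nontrivialValueIndicator c f) K P L x :=
    hpos.trans_le <| le_sum_sieveWeight hKP hdensity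
      (fun B hB ↦ abs_sum_prod_relativeDeviation_le hf hH (fun r hr ↦ hprime r (hB hr))
        fun r hr ↦ hc r (hKPL ▸ hB hr))
      hθ (by simpa using hδ) hδ0 (by simpa using hε)
  obtain ⟨x, hx, hx_pos⟩ := Finset.exists_lt_of_sum_lt (Finset.sum_const_zero.trans_lt hweight)
  refine ⟨x, hx, orderOf_eq_card_sub_one_of_mulChar_ne_one hc (hf x hx) fun r hr hone ↦ ?_⟩
  have := eq_one_of_sieveWeight_pos (fun r ↦ by unfold nontrivialValueIndicator; split_ifs <;> simp)
    hx_pos (hKPL ▸ hr)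
  simp [nontrivialValueIndicator, hone] at this

end PrimitiveSieve

section SieveParameters

lemma primeFactors_eq_union_of_prod_eq {m k : ℕ} {P L : Finset ℕ} (hP : ∀ p ∈ P, p.Prime)
    (hL : ∀ l ∈ L, l.Prime) (hk : k ≠ 0)
    (h : m.primeFactors.prod id = k * (∏ p ∈ P, p) * ∏ l ∈ L, l) :
    m.primeFactors = k.primeFactors ∪ P ∪ L := by
  have hP0 : ∏ p ∈ P, p ≠ 0 := Finset.prod_ne_zero_iff.2 fun p hp ↦ (hP p hp).ne_zero
  have hL0 : ∏ l ∈ L, l ≠ 0 := Finset.prod_ne_zero_iff.2 fun l hl ↦ (hL l hl).ne_zero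
  rw [← Nat.primeFactors_prod_primeFactors m, ← Finset.prod_congr rfl fun p _ ↦ id_eq p, h,
    Nat.primeFactors_mul (mul_ne_zero hk hP0) hL0, Nat.primeFactors_mul hk hP0,
    Nat.primeFactors_prod hP, Nat.primeFactors_prod hL]

lemma totient_div_eq_prod_primeFactors {k : ℕ} (hk : k ≠ 0) :
    (k.totient : ℝ) / k = ∏ r ∈ k.primeFactors, (1 - 1 / (r : ℝ)) := by
  rw [div_eq_iff (mod_cast hk), mul_comm]
  simpa using congrArg ((↑) : ℚ → ℝ) (Nat.totient_eq_mul_prod_factors k)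

lemma pow_div_sq_eq_sqrt_mul_rpow {q : ℝ} (hq : 0 < q) (n : ℕ) :
    q ^ n / q ^ 2 = √(q ^ n) * q ^ ((n : ℝ) / 2 - 2) := by
  have hsqrt : √(q ^ n) = q ^ ((n : ℝ) / 2) := by
    rw [Real.sqrt_eq_rpow, ← Real.rpow_natCast, ← Real.rpow_mul hq.le, mul_one_div]
  rw [Real.rpow_sub hq, ← hsqrt, Real.rpow_ofNat, ← mul_div_assoc,
    Real.mul_self_sqrt (by positivity)]

lemma sieve_bound_pos_of_lt_rpow {q C N θ δ ε : ℝ} {n : ℕ} (hq : 0 < q) (hε : 0 ≤ ε)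
    (hθδε : ε < θ * δ) (hC : 4 * C / (θ * δ - ε) < q ^ ((n : ℝ) / 2 - 2))
    (hN : q ^ n / q ^ 2 - 4 * √(q ^ n) ≤ N) :
    0 < (θ * δ - ε) * N + 4 * √(q ^ n) * θ * δ - 4 * √(q ^ n) * C := by
  have hpos : 0 < θ * δ - ε := sub_pos.2 hθδε
  have hsqrt : 0 < √(q ^ n) := by positivity
  have hmain : √(q ^ n) * (4 * C) < √(q ^ n) * (q ^ ((n : ℝ) / 2 - 2) * (θ * δ - ε)) :=
    mul_lt_mul_of_pos_left ((div_lt_iff₀ hpos).1 hC) hsqrt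
  have hN' := mul_le_mul_of_nonneg_left hN hpos.le
  rw [pow_div_sq_eq_sqrt_mul_rpow hq] at hN'
  linarith [mul_nonneg hsqrt.le hε]

end SieveParameters

/-- The modified prime sieve (Theorem 3.5): write the radical of `q^n - 1` as
`k·P·L` with `k, P, L` pairwise coprime, `P = p_1 ⋯ p_s` a product of `s` distinct
primes (the sieving primes) and `L = l_1 ⋯ l_t` a product of `t` distinct primes
(the large primes). Put `δ = 1 - ∑ 1/pᵢ`, `ε = ∑ 1/lᵢ` and `θ(k) = φ(k)/k`. If
`θ(k)·δ > ε` and `q^(n/2-2) > 4(θ(k)(s-1+2δ)2^(ω(k)) + (t-ε))/(θ(k)δ - ε)`, then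
every pair of traces is achieved by some `ξ` with `ξ + ξ⁻¹` primitive. -/
theorem stmt7 (q n : ℕ) (hq : IsPrimePow q) (hn : 0 < n)
    (k : ℕ) (ps ls : Finset ℕ)
    (hps : ∀ p ∈ ps, p.Prime) (hls : ∀ l ∈ ls, l.Prime)
    (hrad : (q ^ n - 1).primeFactors.prod id = k * (∏ p ∈ ps, p) * (∏ l ∈ ls, l))
    (hkP : Nat.Coprime k (∏ p ∈ ps, p))
    (hkL : Nat.Coprime k (∏ l ∈ ls, l))
    (hPL : Nat.Coprime (∏ p ∈ ps, p) (∏ l ∈ ls, l))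
    (δ ε : ℝ) (hδdef : δ = 1 - ∑ p ∈ ps, (1 : ℝ) / p)
    (hεdef : ε = ∑ l ∈ ls, (1 : ℝ) / l)
    (hθδε : (k.totient : ℝ) / k * δ > ε)
    (hcond : (q : ℝ) ^ ((n : ℝ) / 2 - 2) >
      4 * ((k.totient : ℝ) / k * ((ps.card : ℝ) - 1 + 2 * δ) * 2 ^ k.primeFactors.card +
        ((ls.card : ℝ) - ε)) / ((k.totient : ℝ) / k * δ - ε))
    (F E : Type*) [Field F] [Fintype F] [Field E] [Fintype E] [Algebra F E]
    (hF : Fintype.card F = q) (hE : Fintype.card E = q ^ n) (a b : F) :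
    ∃ ξ : E, ξ ≠ 0 ∧ Algebra.trace F E ξ = a ∧ Algebra.trace F E ξ⁻¹ = b ∧
      orderOf (ξ + ξ⁻¹) = q ^ n - 1 := by
  have hk : k ≠ 0 := by
    refine left_ne_zero_of_mul (left_ne_zero_of_mul (hrad.symm.trans_ne ?_))
    exact Finset.prod_ne_zero_iff.2 fun p hp ↦ (Nat.prime_of_mem_primeFactors hp).ne_zero
  have hfactors : (Fintype.card E - 1).primeFactors = k.primeFactors ∪ ps ∪ ls := by
    rw [hE, primeFactors_eq_union_of_prod_eq hps hls hk hrad]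
  have hdisjoint : Disjoint k.primeFactors ps := by
    simpa [Nat.primeFactors_prod hps] using hkP.disjoint_primeFactors
  have hε : 0 ≤ ε := hεdef ▸ by positivity
  have hδ : 0 ≤ δ := (pos_of_mul_pos_right (hε.trans_lt hθδε) (by positivity)).le
  have hbound := sieve_bound_pos_of_lt_rpow (Nat.cast_pos.2 hq.pos) hε hθδε hcond
    (by simpa [hF, hE] using le_card_traceFibre (E := E) a b)
  obtain ⟨ξ, hξ, hprimitive⟩ := exists_orderOf_eq_card_sub_one_of_sieve
    (fun ξ hξ ↦ (mem_traceFibre.1 hξ).1)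
    (fun χ hχ ↦ by simpa [hE] using norm_sum_traceFibre_le a b hχ) hfactors hdisjoint
    (totient_div_eq_prod_primeFactors hk) hδdef hδ hεdef hbound
  obtain ⟨hne, hTr, hTr_inv⟩ := mem_traceFibre.1 hξ
  exact ⟨ξ, by rintro rfl; simp at hne, hTr, hTr_inv, hprimitive.trans (by rw [hE])⟩
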